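/- arXiv:2602.19434 — 4 statements merged into one kernel-verified Lean document; each statement's English description precedes it below -/
import Mathlib

section
/- There exists a universal constant C < ∞ (independent of n and d) such that for all integers n ≥ 8, d ≥ 3 and every function f : [2^n]^d → ℝ, one has Σ_{k=8}^n E[|∫ f dν_k|] ≤ C·‖f‖_{W^{1,1}}. -/
open MeasureTheory Finset

noncomputable section

/-- Points of the grid `[2^n]^d` (coordinates taken 0-based). -/
abbrev GridPt (n d : ℕ) := Fin d → Fin (2^n)

/-- Normalized counting "volume" of a subset of the grid: `Vol(A) = 2^{-nd}|A|`. -/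
def Vol (n d : ℕ) (A : Finset (GridPt n d)) : ℝ := (A.card : ℝ) / 2^(n*d)

/-- The ℓ1 metric on the grid. -/
def gdist {n d : ℕ} (u v : GridPt n d) : ℝ := ∑ i, |((u i : ℕ) : ℝ) - ((v i : ℕ) : ℝ)|

/-- Indices of the dyadic cubes in `D_k`. -/
abbrev CubeIdx (d k : ℕ) := Fin d → Fin (2^k)

/-- The dyadic cube of side-cardinality `2^(n-k)` indexed by `j ∈ {0,…,2^k-1}^d`. -/
def cube (n d k : ℕ) (j : CubeIdx d k) : Finset (GridPt n d) :=
  Finset.univ.filter (fun x => ∀ i, (x i : ℕ) / 2^(n-k) = (j i : ℕ))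

/-- `p = 2^{-4d}`. -/
def pp (d : ℕ) : ℝ := ((2:ℝ)^(4*d))⁻¹

/-- The law of each `X_Q`: takes values `±1` with probability `p/2` each
and `0` with probability `1-p`. -/
def stepMeasure (d : ℕ) : Measure ℝ :=
  (Real.toNNReal (pp d / 2)) • Measure.dirac (1:ℝ)
  + (Real.toNNReal (pp d / 2)) • Measure.dirac (-1:ℝ)
  + (Real.toNNReal (1 - pp d)) • Measure.dirac (0:ℝ)

instance (d : ℕ) : IsFiniteMeasure (stepMeasure d) := by
  unfold stepMeasure; infer_instance

/-- The joint law of the i.i.d. family `{X_Q}_{Q ∈ D_k}`; a sample point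
`ω : CubeIdx d k → ℝ` records the values `X_Q = ω Q`. -/
def prodMeasure (d k : ℕ) : Measure (CubeIdx d k → ℝ) :=
  Measure.pi fun _ => stepMeasure d

/-- `μ_k(A) = ∑_{Q ∈ D_k} p⁻¹ 2^k X_Q Vol(A ∩ Q)`, as a function of the sample point `ω`. -/
def muMeas (n d k : ℕ) (A : Finset (GridPt n d)) (ω : CubeIdx d k → ℝ) : ℝ :=
  ∑ j : CubeIdx d k, (pp d)⁻¹ * 2^k * ω j * Vol n d (A ∩ cube n d k j)

/-- `ν_k(A) = μ_k(A) - μ_k([2^n]^d)·Vol(A)`. -/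
def nuMeas (n d k : ℕ) (A : Finset (GridPt n d)) (ω : CubeIdx d k → ℝ) : ℝ :=
  muMeas n d k A ω - muMeas n d k Finset.univ ω * Vol n d A

/-- Ordered edges of the grid graph (each unordered edge `{u, u+e_i}` listed exactly once,
in the increasing direction). -/
def edgePairs (n d : ℕ) : Finset (GridPt n d × GridPt n d) :=
  Finset.univ.filter (fun e =>
    ∃ i, ((e.2 i : ℕ) = (e.1 i : ℕ) + 1) ∧ ∀ j, j ≠ i → e.2 j = e.1 j)

/-- The `(1,1)`-Sobolev seminorm `‖f‖_{W^{1,1}}`. -/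
def W11 (n d : ℕ) (f : GridPt n d → ℝ) : ℝ :=
  (1 / ((edgePairs n d).card : ℝ)) * ∑ e ∈ edgePairs n d, 2^n * |f e.2 - f e.1|


lemma aux_lw {α : Type*} [Fintype α] [DecidableEq α] (a0 : α) : ∀ (d : ℕ) (A : Finset (Fin d → α))
    (l : ℝ), 0 < l → (A.card : ℝ) ≤ l ^ d →
    (d : ℝ) * A.card ≤ l * ∑ i, ((A.image (fun x => Function.update x i a0)).card : ℝ) := by
  intro d
  induction d with
  | zero => intro A l _ _; simp
  | succ d ih =>
    intro A l hl hA
    rcases A.eq_empty_or_nonempty with rfl | hne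
    · simp
    set sl : α → Finset (Fin d → α) := fun t =>
      univ.filter (fun y => (Fin.cons t y : Fin (d+1) → α) ∈ A) with hsl
    set M : ℕ := (A.image (fun x => Function.update x 0 a0)).card with hM
    have hcardA : A.card = ∑ t, (sl t).card := by
      rw [← Finset.card_sigma]
      symm
      refine Finset.card_bij (fun p _ => (Fin.cons p.1 p.2 : Fin (d+1) → α)) ?_ ?_ ?_
      · rintro ⟨t, y⟩ h
        simpa [hsl] using h
      · rintro ⟨t, y⟩ _ ⟨t', y'⟩ _ h
        have := Fin.cons_injective2 h
        obtain ⟨e1, e2⟩ := this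
        dsimp only at e1 e2
        subst e1 e2; rfl
      · intro x hx
        exact ⟨⟨x 0, Fin.tail x⟩, by simpa [hsl] using hx, by simp⟩
    have hslM : ∀ t, (sl t).card ≤ M := by
      intro t
      refine Finset.card_le_card_of_injOn (fun y => (Fin.cons a0 y : Fin (d+1) → α)) ?_ ?_
      · intro y hy
        have hy : (Fin.cons t y : Fin (d+1) → α) ∈ A := by simpa [hsl] using hy
        simp only [coe_image, Set.mem_image, mem_coe]
        exact ⟨_, hy, by simp⟩
      · intro y _ y' _ h
        exact (Fin.cons_injective2 h).2
    have hMpos : 0 < M := by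
      rw [hM, Finset.card_pos]; exact hne.image _
    obtain ⟨h, hh, hhM⟩ : ∃ h : ℝ, 0 < h ∧ h ^ d = M := by
      rcases Nat.eq_zero_or_pos d with rfl | hd
      · refine ⟨1, one_pos, ?_⟩
        have : M ≤ 1 := by
          rw [hM]
          apply Finset.card_le_one.2
          intro a ha b hb
          simp only [mem_image] at ha hb
          obtain ⟨x, _, rfl⟩ := ha
          obtain ⟨y, _, rfl⟩ := hb
          funext i
          have : i = 0 := by ext; omega
          subst this; simp
        have : M = 1 := by omega
        simp [this]
      · refine ⟨(M:ℝ) ^ ((d:ℝ)⁻¹), by positivity, ?_⟩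
        exact Real.rpow_inv_natCast_pow (by positivity) hd.ne'
    have hsucc : ∀ j : Fin d, ∑ t, ((sl t).image (fun x => Function.update x j a0)).card
        ≤ (A.image (fun x => Function.update x j.succ a0)).card := by
      intro j
      rw [← Finset.card_sigma]
      refine Finset.card_le_card_of_injOn (fun p => (Fin.cons p.1 p.2 : Fin (d+1) → α)) ?_ ?_
      · rintro ⟨t, y⟩ hy
        simp only [coe_sigma, Set.mem_sigma_iff, mem_coe, mem_image] at hy
        obtain ⟨_, z, hz, rfl⟩ := hy
        have hz : (Fin.cons t z : Fin (d+1) → α) ∈ A := by simpa [hsl] using hz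
        simp only [coe_image, Set.mem_image, mem_coe]
        exact ⟨_, hz, by rw [Fin.cons_update]⟩
      · rintro ⟨t, y⟩ _ ⟨t', y'⟩ _ h
        have := Fin.cons_injective2 h
        obtain ⟨e1, e2⟩ := this
        dsimp only at e1 e2
        subst e1 e2; rfl
    have key : (d:ℝ) * A.card ≤ h * ∑ j : Fin d, ((A.image (fun x => Function.update x j.succ a0)).card : ℝ) := by
      calc (d:ℝ) * A.card = ∑ t, (d:ℝ) * (sl t).card := by
            rw [hcardA]; push_cast; rw [Finset.mul_sum]
        _ ≤ ∑ t, h * ∑ j, (((sl t).image (fun x => Function.update x j a0)).card : ℝ) := by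
            refine Finset.sum_le_sum fun t _ => ih (sl t) h hh ?_
            rw [hhM]; exact_mod_cast hslM t
        _ = h * ∑ j, ∑ t, (((sl t).image (fun x => Function.update x j a0)).card : ℝ) := by
            rw [← Finset.mul_sum, Finset.sum_comm]
        _ ≤ _ := by
            gcongr with j
            exact_mod_cast hsucc j
    rw [Fin.sum_univ_succ, ← hM, ← hhM]
    set S := ∑ j : Fin d, ((A.image (fun x => Function.update x j.succ a0)).card : ℝ)
    set a : ℝ := (A.card : ℝ)
    have ha : 0 ≤ a := by positivity
    have bern := one_add_mul_le_pow (a := h / l - 1) (by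
      have : 0 < h / l := by positivity
      linarith) (d+1)
    have e1 : 1 + (h / l - 1) = h / l := by ring
    rw [e1, div_pow] at bern
    have b2 : a * (1 + ((d+1:ℕ):ℝ) * (h / l - 1)) ≤ h ^ (d+1) := by
      refine (mul_le_mul_of_nonneg_left bern ha).trans ?_
      rw [mul_div_assoc', div_le_iff₀ (by positivity), mul_comm]
      gcongr
    have b3 : a * (l + ((d:ℝ)+1) * (h - l)) ≤ l * h ^ (d+1) := by
      have := mul_le_mul_of_nonneg_left b2 hl.le
      refine le_trans (le_of_eq ?_) this
      push_cast; field_simp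
    refine le_of_mul_le_mul_left ?_ hh
    have := mul_le_mul_of_nonneg_left key hl.le
    push_cast
    rw [pow_succ] at b3
    nlinarith

lemma aux_coarea {X : Type*} [Fintype X] [DecidableEq X] (E : Finset (X × X)) (Φ : (X → ℝ) → ℝ)
    (hadd : ∀ f g, Φ (fun x => f x + g x) ≤ Φ f + Φ g)
    (hsmul : ∀ (c : ℝ) f, 0 ≤ c → Φ (fun x => c * f x) ≤ c * Φ f)
    (hconst : ∀ c, Φ (fun _ => c) ≤ 0) (w : ℝ) (hw : 0 ≤ w)
    (hset : ∀ A : Finset X, Φ (fun x => if x ∈ A then 1 else 0) ≤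
      w * ∑ e ∈ E, |(if e.2 ∈ A then (1:ℝ) else 0) - (if e.1 ∈ A then (1:ℝ) else 0)|) :
    ∀ f, Φ f ≤ w * ∑ e ∈ E, |f e.2 - f e.1| := by
  have main : ∀ (m : ℕ) (f : X → ℝ), (univ.image f).card ≤ m →
      Φ f ≤ w * ∑ e ∈ E, |f e.2 - f e.1| := by
    intro m
    induction m with
    | zero =>
      intro f hf
      have hX : IsEmpty X := by
        by_contra hne
        rw [not_isEmpty_iff] at hne
        have : (univ.image f).Nonempty := univ_nonempty.image _
        have := Finset.card_pos.2 this
        omega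
      have : f = fun _ => 0 := by funext x; exact (hX.false x).elim
      rw [this]
      exact (hconst 0).trans (by positivity)
    | succ m ih =>
      intro f hf
      by_cases h1 : (univ.image f).card ≤ 1
      · have hnn : 0 ≤ w * ∑ e ∈ E, |f e.2 - f e.1| := by positivity
        refine le_trans ?_ hnn
        rw [Finset.card_le_one] at h1
        rcases isEmpty_or_nonempty X with hX | ⟨⟨x0⟩⟩
        · have : f = fun _ => 0 := by funext x; exact (hX.false x).elim
          rw [this]; exact hconst 0
        · have : f = fun _ => f x0 := by
            funext x; exact h1 _ (by simp) _ (by simp)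
          rw [this]; exact hconst _
      · push Not at h1
        have hne : (univ.image f).Nonempty := Finset.card_pos.1 (by omega)
        set M := (univ.image f).max' hne with hM
        have hMm : M ∈ univ.image f := Finset.max'_mem _ _
        have hne2 : ((univ.image f).erase M).Nonempty := by
          apply Finset.card_pos.1; rw [Finset.card_erase_of_mem hMm]; omega
        set M2 := ((univ.image f).erase M).max' hne2 with hM2
        have hM2m : M2 ∈ (univ.image f).erase M := Finset.max'_mem _ _
        have hlt : M2 < M := by
          refine lt_of_le_of_ne ?_ (Finset.ne_of_mem_erase hM2m)
          exact Finset.le_max' _ _ (Finset.mem_of_mem_erase hM2m)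
        have hdich : ∀ x, f x = M ∨ f x ≤ M2 := by
          intro x
          by_cases h : f x = M
          · exact Or.inl h
          · right; exact Finset.le_max' _ _ (by simp [h])
        set g : X → ℝ := fun x => min (f x) M2 with hg
        set A : Finset X := univ.filter (fun x => f x = M) with hA
        have hgi : (univ.image g).card ≤ m := by
          have : univ.image g ⊆ (univ.image f).erase M := by
            intro y hy
            simp only [mem_image, mem_univ, true_and] at hy
            obtain ⟨x, rfl⟩ := hy
            rcases hdich x with h | h
            · have : g x = M2 := by simp [hg, h, hlt.le]
              rw [this]; exact hM2m
            · have : g x = f x := by simp [hg, h]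
              rw [this]
              simp only [mem_erase, mem_image, mem_univ, true_and, exists_apply_eq_apply, and_true]
              linarith
          have := Finset.card_le_card this
          rw [Finset.card_erase_of_mem hMm] at this
          omega
        have hgx : ∀ x, (f x = M ∧ g x = M2 ∧ (if x ∈ A then (1:ℝ) else 0) = 1) ∨
            (f x ≤ M2 ∧ g x = f x ∧ (if x ∈ A then (1:ℝ) else 0) = 0) := by
          intro x
          rcases hdich x with h | h
          · left; exact ⟨h, by simp [hg, h, hlt.le], by simp [hA, h]⟩
          · right; exact ⟨h, by simp [hg, h], by
              have : f x ≠ M := by linarith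
              simp [hA, this]⟩
        have hfe : f = fun x => g x + (M - M2) * (if x ∈ A then (1:ℝ) else 0) := by
          funext x
          rcases hgx x with ⟨h1, h2, h3⟩ | ⟨h1, h2, h3⟩ <;> rw [h2, h3] <;> linarith
        have hedge : ∀ u v, |f v - f u| = |g v - g u| + (M - M2) *
            |(if v ∈ A then (1:ℝ) else 0) - (if u ∈ A then (1:ℝ) else 0)| := by
          intro u v
          rcases hgx u with ⟨h1, h2, h3⟩ | ⟨h1, h2, h3⟩ <;>
          rcases hgx v with ⟨k1, k2, k3⟩ | ⟨k1, k2, k3⟩ <;> rw [h2, h3, k2, k3]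
          · rw [h1, k1]; simp
          · rw [h1, abs_of_nonpos (by linarith), abs_of_nonpos (by linarith)]; norm_num
          · rw [k1, abs_of_nonneg (by linarith), abs_of_nonneg (by linarith)]; norm_num
          · simp
        calc Φ f ≤ Φ g + Φ (fun x => (M - M2) * (if x ∈ A then (1:ℝ) else 0)) := by
              conv_lhs => rw [hfe]
              exact hadd _ _
          _ ≤ Φ g + (M - M2) * Φ (fun x => (if x ∈ A then (1:ℝ) else 0)) := by
              gcongr; exact hsmul _ _ (by linarith)
          _ ≤ w * ∑ e ∈ E, |g e.2 - g e.1| + (M - M2) * (w * ∑ e ∈ E,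
              |(if e.2 ∈ A then (1:ℝ) else 0) - (if e.1 ∈ A then (1:ℝ) else 0)|) := by
              have : 0 ≤ M - M2 := by linarith
              gcongr
              · exact ih g hgi
              · exact hset A
          _ = w * ∑ e ∈ E, |f e.2 - f e.1| := by
              simp_rw [hedge]
              rw [Finset.sum_add_distrib, ← Finset.mul_sum]; ring
  exact fun f => main _ f le_rfl


lemma aux_num (n d : ℕ) (hd : 3 ≤ d) (v s : ℝ) (hv : 0 < v) (hv2 : v ≤ 1/2) (hs : 0 < s)
    (hvs : v * s ^ d = 1) (T : ℕ → ℝ)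
    (h1 : ∀ k ∈ Finset.Icc 8 n, T k ≤ 2 ^ k * (2 * v))
    (h2 : ∀ k ∈ Finset.Icc 8 n, T k ^ 2 ≤ (2^k)^2 * 2 ^ (4*d) * (2 * v / 2 ^ (k*d))) :
    ∑ k ∈ Finset.Icc 8 n, T k ≤ 2048 * (v * (s - 1)) := by
  set q : ℝ := Real.sqrt (1/2) with hq
  have hq0 : 0 ≤ q := Real.sqrt_nonneg _
  have hqq : q ^ 2 = 1/2 := Real.sq_sqrt (by norm_num)
  have hq1 : q ≤ 3/4 := by nlinarith
  have hqi : 1 / 4 ≤ 1 - q := by linarith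
  -- main decay
  have dec : ∀ K : ℕ, 16 * s ≤ 2 ^ K → ∀ k ∈ Finset.Icc 8 n, K ≤ k →
      T k ≤ 2 * v * 2 ^ K * (q ^ (k - K)) ^ (d - 2) := by
    intro K hK k hk hKk
    obtain ⟨j, rfl⟩ := Nat.exists_eq_add_of_le hKk
    obtain ⟨e, rfl⟩ := Nat.exists_eq_add_of_le (show 2 ≤ d by omega)
    rw [show K + j - K = j by omega, show 2 + e - 2 = e by omega]
    refine le_of_sq_le_sq ?_ (by positivity)
    refine (h2 _ hk).trans ?_
    have a1 : (2:ℝ) ^ (4 * (2 + e)) ≤ v * 2 ^ (K * (2+e)) := by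
      calc (2:ℝ) ^ (4 * (2 + e)) = 16 ^ (2+e) * (v * s ^ (2+e)) := by
            rw [hvs, pow_mul]; norm_num
        _ = v * (16 * s) ^ (2+e) := by rw [mul_pow]; ring
        _ ≤ v * (2 ^ K) ^ (2+e) := by gcongr
        _ = _ := by rw [pow_mul]
    have a2 : ((q ^ j) ^ e) ^ 2 = (2 ^ (j * e))⁻¹ := by
      rw [← pow_mul q j e, ← pow_mul, mul_comm (j * e) 2, pow_mul, hqq]; simp
    calc ((2:ℝ) ^ (K + j)) ^ 2 * 2 ^ (4 * (2 + e)) * (2 * v / 2 ^ ((K + j) * (2 + e)))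
        ≤ ((2:ℝ) ^ (K + j)) ^ 2 * (v * 2 ^ (K * (2+e))) * (2 * v / 2 ^ ((K + j) * (2 + e))) := by
          gcongr
      _ = 2 * v ^ 2 * (2 ^ K) ^ 2 * (2 ^ (j * e))⁻¹ := by
          rw [show (K + j) * (2 + e) = K * (2 + e) + (j * 2 + j * e) by ring, pow_add, pow_add,
            pow_add, pow_mul _ j 2]
          field_simp
      _ ≤ (2 * v * 2 ^ K * (q ^ j) ^ e) ^ 2 := by
          rw [mul_pow _ ((q ^ j) ^ e), a2, mul_pow, mul_pow]
          gcongr; norm_num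
  have geo : ∀ m : ℕ, ∑ j ∈ range m, q ^ j ≤ 4 := by
    intro m
    have h := geom_sum_mul q m
    have h0 : 0 ≤ q ^ m := by positivity
    have h3 : 0 ≤ ∑ j ∈ range m, q ^ j := by positivity
    nlinarith
  have geo2 : ∀ m : ℕ, ∑ j ∈ range m, (2:ℝ) ^ j ≤ 2 ^ m := by
    intro m
    have h := geom_sum_mul (2:ℝ) m
    linarith
  have hqj : ∀ j : ℕ, (q ^ j) ^ (d - 2) ≤ q ^ j := by
    intro j
    refine pow_le_of_le_one (by positivity) (pow_le_one₀ hq0 (by linarith)) (by omega)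
  by_cases hs2 : 2 ≤ s
  · obtain ⟨K', hK1, hK2⟩ := exists_nat_pow_near (show 1 ≤ 16 * s by linarith) (one_lt_two)
    set K := K' + 1 with hK
    have hK3 : (2:ℝ) ^ K ≤ 32 * s := by rw [hK, pow_succ]; linarith
    set F : ℕ → ℝ := fun k => if k < K then 2 ^ k * (2 * v) else 2 * v * 2 ^ K * q ^ (k - K) with hF
    have hF0 : ∀ k, 0 ≤ F k := by
      intro k; simp only [hF]; split_ifs <;> positivity
    calc ∑ k ∈ Finset.Icc 8 n, T k ≤ ∑ k ∈ Finset.Icc 8 n, F k := by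
          refine Finset.sum_le_sum fun k hk => ?_
          simp only [hF]; split_ifs with h
          · exact h1 k hk
          · refine (dec K hK2.le k hk (by omega)).trans ?_
            gcongr; exact hqj _
      _ ≤ ∑ k ∈ range (K + (n+1)), F k := by
          refine Finset.sum_le_sum_of_subset_of_nonneg ?_ (fun k _ _ => hF0 k)
          intro k hk; simp only [Finset.mem_Icc] at hk; simp only [Finset.mem_range]; omega
      _ = (∑ k ∈ range K, (2:ℝ) ^ k) * (2 * v) + 2 * v * 2 ^ K * ∑ k ∈ range (n+1), q ^ k := by
          rw [Finset.sum_range_add, Finset.sum_mul, Finset.mul_sum]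
          congr 1
          · refine Finset.sum_congr rfl fun k hk => ?_
            simp [hF, Finset.mem_range.1 hk]
          · refine Finset.sum_congr rfl fun k hk => ?_
            simp [hF]
      _ ≤ 2 ^ K * (2 * v) + 2 * v * 2 ^ K * 4 := by
          gcongr
          · exact geo2 K
          · exact geo _
      _ = 10 * v * 2 ^ K := by ring
      _ ≤ 10 * v * (32 * s) := by gcongr
      _ ≤ _ := by nlinarith
  · push Not at hs2
    have hsd : 1 / 2 ≤ d * (s - 1) := by
      have e1 : s ≤ Real.exp (s - 1) := by
        have := Real.add_one_le_exp (s - 1); linarith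
      have e2 : 2 ≤ s ^ d := by
        have : 0 < s ^ d := by positivity
        nlinarith
      have e3 : (2:ℝ) ≤ Real.exp (d * (s - 1)) := by
        rw [Real.exp_nat_mul]
        exact e2.trans (by gcongr)
      have e4 : Real.log 2 ≤ d * (s - 1) := (Real.log_le_iff_le_exp (by norm_num)).2 e3
      have := Real.log_two_gt_d9
      linarith
    have hqd : (q ^ 3) ^ (d - 2) * d ≤ 4 := by
      calc (q ^ 3) ^ (d - 2) * d ≤ (q ^ 2) ^ (d - 2) * 2 ^ d := by
            have : (d:ℝ) ≤ 2 ^ d := by exact_mod_cast Nat.lt_two_pow_self.le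
            have h3 : q ^ 3 ≤ q ^ 2 := pow_le_pow_of_le_one hq0 (by linarith) (by norm_num)
            gcongr
        _ = 4 := by
            obtain ⟨e, rfl⟩ := Nat.exists_eq_add_of_le (show 2 ≤ d by omega)
            rw [show 2 + e - 2 = e by omega, hqq, pow_add]
            rw [mul_left_comm, ← mul_pow]; norm_num
    set F : ℕ → ℝ := fun k => if k < 8 then 0 else 64 * v * (q ^ 3) ^ (d - 2) * q ^ (k - 8) with hF
    have hF0 : ∀ k, 0 ≤ F k := by
      intro k; simp only [hF]; split_ifs <;> positivity
    calc ∑ k ∈ Finset.Icc 8 n, T k ≤ ∑ k ∈ Finset.Icc 8 n, F k := by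
          refine Finset.sum_le_sum fun k hk => ?_
          have hk8 := (Finset.mem_Icc.1 hk).1
          simp only [hF]; rw [if_neg (by omega)]
          refine (dec 5 (by linarith) k hk (by omega)).trans ?_
          rw [show k - 5 = 3 + (k - 8) by omega, pow_add, mul_pow, ← mul_assoc]
          have := hqj (k - 8)
          gcongr ?_ * ?_ * ?_
          linarith
      _ ≤ ∑ k ∈ range (8 + (n+1)), F k := by
          refine Finset.sum_le_sum_of_subset_of_nonneg ?_ (fun k _ _ => hF0 k)
          intro k hk; simp only [Finset.mem_Icc] at hk; simp only [Finset.mem_range]; omega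
      _ = 64 * v * (q ^ 3) ^ (d - 2) * ∑ k ∈ range (n+1), q ^ k := by
          rw [Finset.sum_range_add, Finset.mul_sum]
          rw [Finset.sum_eq_zero, zero_add]
          · refine Finset.sum_congr rfl fun k hk => ?_
            simp [hF]
          · intro k hk
            simp [hF]; intro h; have := Finset.mem_range.1 hk; omega
      _ ≤ 64 * v * (q ^ 3) ^ (d - 2) * 4 := by
          gcongr; exact geo _
      _ = 256 * v * (q ^ 3) ^ (d - 2) * 1 := by ring
      _ ≤ 256 * v * (q ^ 3) ^ (d - 2) * (2 * (d * (s - 1))) := by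
          gcongr; linarith
      _ = 512 * v * (s - 1) * ((q ^ 3) ^ (d - 2) * d) := by ring
      _ ≤ 512 * v * (s - 1) * 4 := by
          have : 0 ≤ s - 1 := by
            by_contra hneg
            push Not at hneg
            have : (d:ℝ) * (s-1) ≤ 0 := mul_nonpos_of_nonneg_of_nonpos (by positivity) hneg.le
            linarith
          gcongr
      _ = _ := by ring

lemma pp_pos (d : ℕ) : 0 < pp d := by unfold pp; positivity

lemma pp_le_one (d : ℕ) : pp d ≤ 1 := by
  unfold pp; exact inv_le_one_of_one_le₀ (one_le_pow₀ (by norm_num))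

lemma integrable_step (d : ℕ) (g : ℝ → ℝ) : Integrable g (stepMeasure d) := by
  unfold stepMeasure
  refine Integrable.add_measure (Integrable.add_measure ?_ ?_) ?_ <;>
  · refine Integrable.smul_measure_nnreal ?_
    exact integrable_dirac (by simp [enorm_lt_top])

lemma integral_step (d : ℕ) (g : ℝ → ℝ) :
    ∫ x, g x ∂(stepMeasure d) = pp d / 2 * g 1 + pp d / 2 * g (-1) + (1 - pp d) * g 0 := by
  have hi : ∀ (c : NNReal) (a : ℝ), Integrable g (c • Measure.dirac a) := fun c a =>
    (Integrable.smul_measure_nnreal (integrable_dirac (by simp [enorm_lt_top])))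
  have h1 := pp_pos d
  have h2 := pp_le_one d
  unfold stepMeasure
  rw [integral_add_measure ((hi _ _).add_measure (hi _ _)) (hi _ _),
    integral_add_measure (hi _ _) (hi _ _)]
  simp only [integral_smul_nnreal_measure, integral_dirac]
  simp only [NNReal.smul_def, smul_eq_mul]
  rw [Real.coe_toNNReal _ (by linarith), Real.coe_toNNReal _ (by linarith)]

instance step_prob (d : ℕ) : IsProbabilityMeasure (stepMeasure d) := by
  have h := integral_step d (fun _ => 1)
  rw [integral_const] at h
  have h3 : (stepMeasure d).real Set.univ = 1 := by
    rw [smul_eq_mul, mul_one] at h; rw [h]; ring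
  constructor
  have := (ENNReal.toReal_eq_one_iff _).1 h3
  exact this

instance prod_prob (d k : ℕ) : IsProbabilityMeasure (prodMeasure d k) := by
  unfold prodMeasure; infer_instance

lemma memLp_coord (d k : ℕ) (j : CubeIdx d k) :
    MemLp (fun ω : CubeIdx d k → ℝ => ω j) 2 (prodMeasure d k) := by
  rw [memLp_two_iff_integrable_sq (measurable_pi_apply j).aestronglyMeasurable]
  unfold prodMeasure
  exact integrable_comp_eval (μ := fun _ : CubeIdx d k => stepMeasure d) (i := j)
    (f := fun x : ℝ => x ^ 2) (integrable_step d _)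

lemma integral_coord (d k : ℕ) (j : CubeIdx d k) (g : ℝ → ℝ) :
    ∫ ω, g (ω j) ∂(prodMeasure d k) =
      pp d / 2 * g 1 + pp d / 2 * g (-1) + (1 - pp d) * g 0 := by
  unfold prodMeasure
  rw [← integral_step]
  exact integral_comp_eval (μ := fun _ : CubeIdx d k => stepMeasure d) (i := j)
    (f := g) (integrable_step d g).aestronglyMeasurable

lemma integrable_abs_lin (d k : ℕ) (b : CubeIdx d k → ℝ) :
    Integrable (fun ω => |∑ j, b j * ω j|) (prodMeasure d k) := by
  refine Integrable.abs ?_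
  refine integrable_finsetSum _ fun j _ => ?_
  exact ((memLp_coord d k j).integrable (by norm_num)).const_mul _

lemma lin_L1 (d k : ℕ) (b : CubeIdx d k → ℝ) :
    ∫ ω, |∑ j, b j * ω j| ∂(prodMeasure d k) ≤ pp d * ∑ j, |b j| := by
  have hi : ∀ j, Integrable (fun ω : CubeIdx d k → ℝ => |b j| * |ω j|) (prodMeasure d k) := fun j =>
    (((memLp_coord d k j).integrable (by norm_num)).abs).const_mul _
  calc ∫ ω, |∑ j, b j * ω j| ∂(prodMeasure d k)
      ≤ ∫ ω, ∑ j, |b j| * |ω j| ∂(prodMeasure d k) := by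
        refine integral_mono (integrable_abs_lin d k b) (integrable_finsetSum _ fun j _ => hi j) ?_
        intro ω
        refine (Finset.abs_sum_le_sum_abs _ _).trans (le_of_eq ?_)
        simp_rw [abs_mul]
    _ = ∑ j, |b j| * pp d := by
        rw [integral_finsetSum _ fun j _ => hi j]
        refine Finset.sum_congr rfl fun j _ => ?_
        rw [integral_const_mul, integral_coord d k j (fun x => |x|)]
        simp
    _ = _ := by rw [← Finset.sum_mul, mul_comm]

lemma lin_L2 (d k : ℕ) (b : CubeIdx d k → ℝ) :
    (∫ ω, |∑ j, b j * ω j| ∂(prodMeasure d k)) ^ 2 ≤ pp d * ∑ j, b j ^ 2 := by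
  set Y : CubeIdx d k → (CubeIdx d k → ℝ) → ℝ := fun j ω => b j * ω j with hY
  have hYL : ∀ j, MemLp (Y j) 2 (prodMeasure d k) := fun j => (memLp_coord d k j).const_mul _
  have hS : MemLp (fun ω => ∑ j, b j * ω j) 2 (prodMeasure d k) :=
    memLp_finsetSum _ fun j _ => hYL j
  have hind : ProbabilityTheory.iIndepFun Y (prodMeasure d k) := by
    unfold prodMeasure
    exact ProbabilityTheory.iIndepFun_pi (X := fun j (x : ℝ) => b j * x) (fun j => by fun_prop)
  have hmean : ∫ ω, ∑ j, b j * ω j ∂(prodMeasure d k) = 0 := by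
    rw [integral_finsetSum _ fun j _ => (hYL j).integrable (by norm_num)]
    refine Finset.sum_eq_zero fun j _ => ?_
    rw [integral_const_mul, integral_coord d k j (fun x => x)]
    ring
  have hvar := ProbabilityTheory.IndepFun.variance_sum (s := Finset.univ) (X := Y)
    (fun j _ => hYL j) (fun i _ j _ hij => hind.indepFun hij)
  have hvj : ∀ j, ProbabilityTheory.variance (Y j) (prodMeasure d k) = b j ^ 2 * pp d := by
    intro j
    rw [hY, ProbabilityTheory.variance_const_mul,
      ProbabilityTheory.variance_eq_sub (memLp_coord d k j)]
    have h1 := integral_coord d k j (fun x => x ^ 2)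
    have h2 := integral_coord d k j (fun x => x)
    simp only [Pi.pow_apply]
    rw [h1, h2]; ring
  have h1 := ProbabilityTheory.variance_nonneg (fun ω => |∑ j, b j * ω j|) (prodMeasure d k)
  have hSa : MemLp (fun ω => |∑ j, b j * ω j|) 2 (prodMeasure d k) := hS.abs
  rw [ProbabilityTheory.variance_eq_sub hSa] at h1
  have h2 := ProbabilityTheory.variance_eq_sub hS
  have e : (∑ j, Y j) = fun ω => ∑ j, b j * ω j := by
    funext ω; simp [hY]
  rw [e, h2, hmean] at hvar
  simp only [Pi.pow_apply, sq_abs] at h1 hvar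
  simp_rw [hvj] at hvar
  rw [← Finset.sum_mul] at hvar
  linarith

lemma edge_card (n d : ℕ) : (edgePairs n d).card ≤ d * (2 ^ n) ^ d := by
  have h : (Finset.univ : Finset (Fin d × GridPt n d)).card = d * (2 ^ n) ^ d := by
    simp
  rw [← h]
  refine Finset.card_le_card_of_surjOn (fun p : Fin d × GridPt n d => ((p.2, Function.update p.2 p.1
    (Fin.ofNat (2 ^ n) ((p.2 p.1 : ℕ) + 1))) : GridPt n d × GridPt n d)) ?_
  rintro ⟨u, v⟩ he
  simp only [edgePairs, coe_filter, mem_univ, true_and, Set.mem_ofPred_eq] at he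
  obtain ⟨i, hi, hj⟩ := he
  refine ⟨(i, u), by simp, ?_⟩
  simp only [Prod.mk.injEq, true_and]
  funext j
  by_cases h : j = i
  · subst h
    rw [Function.update_self]
    ext
    rw [Fin.val_ofNat, ← hi, Nat.mod_eq_of_lt (v j).isLt]
  · rw [Function.update_of_ne h, hj j h]

/-- crossing edges in direction `i` -/
def crossing (n d : ℕ) (A : Finset (GridPt n d)) (i : Fin d) : Finset (GridPt n d × GridPt n d) :=
  (edgePairs n d).filter (fun e => (e.2 i : ℕ) = (e.1 i : ℕ) + 1 ∧ ¬ (e.1 ∈ A ↔ e.2 ∈ A))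

lemma line_cross {N : ℕ} (P : Fin N → Prop) (a b : Fin N) (ha : P a) (hb : ¬ P b) :
    ∃ t u : Fin N, (u : ℕ) = t + 1 ∧ ¬ (P t ↔ P u) := by
  by_contra hcon
  push Not at hcon
  have h0 : 0 < N := by have := a.isLt; omega
  have key : ∀ (m : ℕ) (hm : m < N), P ⟨m, hm⟩ ↔ P ⟨0, h0⟩ := by
    intro m
    induction m with
    | zero => intro hm; exact Iff.rfl
    | succ m ih =>
      intro hm
      rw [← ih (by omega)]
      exact (hcon ⟨m, by omega⟩ ⟨m+1, hm⟩ rfl).symm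
  exact hb ((key b b.isLt).2 ((key a a.isLt).1 ha))

lemma proj_le (n d : ℕ) (A : Finset (GridPt n d)) (a0 : Fin (2 ^ n)) (i : Fin d) :
    2 ^ n * (A.image (fun x => Function.update x i a0)).card ≤
      A.card + 2 ^ n * (crossing n d A i).card := by
  set I := A.image (fun x => Function.update x i a0) with hI
  have hIi : ∀ z ∈ I, z i = a0 := by
    intro z hz
    simp only [hI, mem_image] at hz
    obtain ⟨x, _, rfl⟩ := hz
    simp
  have hfull : (I.filter (fun z => ∀ t, Function.update z i t ∈ A)).card * 2 ^ n ≤ A.card := by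
    have e : (I.filter (fun z => ∀ t, Function.update z i t ∈ A)).card * 2 ^ n =
      ((I.filter (fun z => ∀ t, Function.update z i t ∈ A)) ×ˢ
        (Finset.univ : Finset (Fin (2 ^ n)))).card := by
      rw [Finset.card_product]; simp
    rw [e]
    refine Finset.card_le_card_of_injOn (fun p => Function.update p.1 i p.2) ?_ ?_
    · rintro ⟨z, t⟩ h
      simp only [coe_product, Set.mem_prod, mem_coe, mem_filter] at h
      exact h.1.2 t
    · rintro ⟨z, t⟩ h ⟨z', t'⟩ h' heq
      simp only [coe_product, Set.mem_prod, mem_coe, mem_filter] at h h'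
      simp only at heq
      have e1 : t = t' := by simpa using congrFun heq i
      have e2 : z = z' := by
        funext j
        by_cases hj : j = i
        · subst hj; rw [hIi z h.1.1, hIi z' h'.1.1]
        · simpa [hj] using congrFun heq j
      rw [e1, e2]
  have hnon : (I.filter (fun z => ¬ ∀ t, Function.update z i t ∈ A)).card ≤
      (crossing n d A i).card := by
    refine Finset.card_le_card_of_surjOn (fun e => Function.update e.1 i a0) ?_
    intro z hz
    simp only [coe_filter, Set.mem_ofPred_eq] at hz
    obtain ⟨hzI, hz2⟩ := hz
    push Not at hz2
    obtain ⟨t1, ht1⟩ := hz2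
    have hzI' := hzI
    simp only [hI, mem_image] at hzI'
    obtain ⟨x, hx, hxz⟩ := hzI'
    have ht0 : Function.update z i (x i) ∈ A := by
      rw [← hxz]; simpa using hx
    obtain ⟨t, u, htu, hne⟩ := line_cross (fun t => Function.update z i t ∈ A) _ _ ht0 ht1
    refine ⟨(Function.update z i t, Function.update z i u), ?_, ?_⟩
    · simp only [crossing, edgePairs, coe_filter, mem_filter, mem_univ, true_and, Set.mem_ofPred_eq]
      refine ⟨⟨i, by simpa using htu, fun j hj => by simp [hj]⟩, by simpa using htu, hne⟩
    · simp only [Function.update_idem]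
      rw [← hIi z hzI, Function.update_eq_self]
  have hsum := Finset.card_filter_add_card_filter_not (s := I)
    (fun z => ∀ t, Function.update z i t ∈ A)
  rw [← hsum, mul_add, mul_comm]
  refine add_le_add hfull (Nat.mul_le_mul_left _ ?_)
  convert hnon

lemma crossing_sum (n d : ℕ) (A : Finset (GridPt n d)) :
    ∑ i, ((crossing n d A i).card : ℝ) ≤ ∑ e ∈ edgePairs n d,
      |(if e.2 ∈ A then (1:ℝ) else 0) - (if e.1 ∈ A then (1:ℝ) else 0)| := by
  have h1 : ∑ i, (crossing n d A i).card ≤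
      ((edgePairs n d).filter (fun e => ¬ (e.1 ∈ A ↔ e.2 ∈ A))).card := by
    rw [← Finset.card_biUnion]
    · refine Finset.card_le_card ?_
      intro e he
      simp only [mem_biUnion, crossing, mem_filter] at he
      obtain ⟨i, _, h1, h2, h3⟩ := he
      simp only [mem_filter]
      exact ⟨h1, h3⟩
    · intro i _ j _ hij
      simp only [Function.onFun]
      rw [Finset.disjoint_left]
      intro e he he'
      simp only [crossing, mem_filter, edgePairs, mem_univ, true_and] at he he'
      obtain ⟨⟨l, hl, hl'⟩, hi, _⟩ := he
      obtain ⟨_, hj, _⟩ := he'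
      have ei : i = l := by
        by_contra h
        have := hl' i h
        rw [this] at hi; omega
      have ej : j = l := by
        by_contra h
        have := hl' j h
        rw [this] at hj; omega
      exact hij (ei.trans ej.symm)
  have h2 : (((edgePairs n d).filter (fun e => ¬ (e.1 ∈ A ↔ e.2 ∈ A))).card : ℝ) =
      ∑ e ∈ edgePairs n d,
      |(if e.2 ∈ A then (1:ℝ) else 0) - (if e.1 ∈ A then (1:ℝ) else 0)| := by
    rw [Finset.card_filter]
    push_cast
    refine Finset.sum_congr rfl fun e _ => ?_
    by_cases h : e.1 ∈ A <;> by_cases h' : e.2 ∈ A <;> simp [h, h']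
  rw [← h2]
  exact_mod_cast h1

lemma iso (n d : ℕ) (A : Finset (GridPt n d)) (s : ℝ) (hs : 0 < s)
    (hsA : (A.card : ℝ) * s ^ d = (2 ^ n) ^ d) :
    (d:ℝ) * A.card * (s - 1) ≤ 2 ^ n * ∑ e ∈ edgePairs n d,
      |(if e.2 ∈ A then (1:ℝ) else 0) - (if e.1 ∈ A then (1:ℝ) else 0)| := by
  have a0 : Fin (2 ^ n) := ⟨0, by positivity⟩
  have h1 := aux_lw a0 d A (2 ^ n / s) (by positivity) (by
    rw [div_pow, le_div_iff₀ (by positivity)]; exact hsA.le)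
  have h2 : (2:ℝ) ^ n * ∑ i, ((A.image (fun x => Function.update x i a0)).card : ℝ) ≤
      d * A.card + 2 ^ n * ∑ i, ((crossing n d A i).card : ℝ) := by
    rw [Finset.mul_sum, Finset.mul_sum]
    have : (d:ℝ) * A.card = ∑ i : Fin d, (A.card : ℝ) := by simp
    rw [this, ← Finset.sum_add_distrib]
    refine Finset.sum_le_sum fun i _ => ?_
    exact_mod_cast proj_le n d A a0 i
  have h3 : (2:ℝ) ^ n * ∑ i, ((crossing n d A i).card : ℝ) ≤ _ :=
    mul_le_mul_of_nonneg_left (crossing_sum n d A) (by positivity)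
  rw [div_mul_eq_mul_div, le_div_iff₀ hs] at h1
  linarith

/-- coefficients -/
def acoef (n d k : ℕ) (f : GridPt n d → ℝ) (j : CubeIdx d k) : ℝ :=
  ∑ x, f x * (Vol n d ({x} ∩ cube n d k j) - Vol n d (Finset.univ ∩ cube n d k j) * Vol n d {x})

lemma lin_form (n d k : ℕ) (f : GridPt n d → ℝ) (ω : CubeIdx d k → ℝ) :
    ∑ x, f x * nuMeas n d k {x} ω = ∑ j, ((pp d)⁻¹ * 2 ^ k * acoef n d k f j) * ω j := by
  unfold nuMeas muMeas acoef
  simp_rw [Finset.mul_sum, Finset.sum_mul]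
  rw [Finset.sum_comm]
  refine Finset.sum_congr rfl fun x _ => ?_
  rw [← Finset.sum_sub_distrib, Finset.mul_sum]
  refine Finset.sum_congr rfl fun j _ => ?_
  ring

lemma vol_sum (n d : ℕ) (A C : Finset (GridPt n d)) :
    ∑ x ∈ A, Vol n d ({x} ∩ C) = Vol n d (A ∩ C) := by
  unfold Vol
  rw [← Finset.sum_div]
  congr 1
  rw [← Finset.filter_mem_eq_inter, Finset.card_filter]
  push_cast
  refine Finset.sum_congr rfl fun x _ => ?_
  by_cases h : x ∈ C <;> simp [h]

lemma acoef_ind (n d k : ℕ) (A : Finset (GridPt n d)) (j : CubeIdx d k) :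
    acoef n d k (fun x => if x ∈ A then 1 else 0) j =
      Vol n d (A ∩ cube n d k j) - Vol n d (Finset.univ ∩ cube n d k j) * Vol n d A := by
  have h := vol_sum n d A Finset.univ
  simp only [Finset.inter_univ] at h
  rw [← vol_sum n d A (cube n d k j), ← h, Finset.mul_sum, ← Finset.sum_sub_distrib]
  unfold acoef
  simp only [ite_mul, one_mul, zero_mul]
  rw [Finset.sum_ite_mem, Finset.univ_inter]

lemma vol_univ (n d : ℕ) : Vol n d Finset.univ = 1 := by
  unfold Vol
  simp [pow_mul]

lemma vol_nonneg (n d : ℕ) (A : Finset (GridPt n d)) : 0 ≤ Vol n d A := by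
  unfold Vol; positivity

lemma vol_mono (n d : ℕ) {A B : Finset (GridPt n d)} (h : A ⊆ B) : Vol n d A ≤ Vol n d B := by
  unfold Vol; gcongr

lemma vol_compl (n d : ℕ) (A C : Finset (GridPt n d)) :
    Vol n d (Aᶜ ∩ C) = Vol n d (Finset.univ ∩ C) - Vol n d (A ∩ C) := by
  rw [← vol_sum, ← vol_sum, ← vol_sum, ← Finset.sum_add_sum_compl A]
  ring

lemma acoef_const (n d k : ℕ) (c : ℝ) (j : CubeIdx d k) :
    acoef n d k (fun _ => c) j = 0 := by
  have h := acoef_ind n d k Finset.univ j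
  rw [vol_univ] at h
  simp only [mem_univ, if_true, mul_one, sub_self] at h
  unfold acoef at h ⊢
  rw [← Finset.mul_sum]
  simp only [one_mul] at h
  rw [h, mul_zero]

lemma vol_cubes (n d k : ℕ) (A : Finset (GridPt n d)) :
    ∑ j, Vol n d (A ∩ cube n d k j) ≤ Vol n d A := by
  unfold Vol
  rw [← Finset.sum_div]
  gcongr
  have : ∑ j, (A ∩ cube n d k j).card ≤ A.card := by
    rw [← Finset.card_biUnion]
    · refine Finset.card_le_card ?_
      intro x hx
      simp only [mem_biUnion, mem_inter] at hx
      obtain ⟨_, _, h, _⟩ := hx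
      exact h
    · intro i _ j _ hij
      simp only [Function.onFun]
      rw [Finset.disjoint_left]
      intro x hx hx'
      simp only [cube, mem_inter, mem_filter, mem_univ, true_and] at hx hx'
      apply hij
      funext l
      ext
      rw [← hx.2 l, ← hx'.2 l]
  exact_mod_cast this

lemma vol_cube_le (n d k : ℕ) (hk : k ≤ n) (j : CubeIdx d k) :
    Vol n d (Finset.univ ∩ cube n d k j) ≤ 1 / 2 ^ (k * d) := by
  have hc : (cube n d k j).card ≤ (2 ^ (n - k)) ^ d := by
    have e : (Finset.univ : Finset (Fin d → Fin (2 ^ (n - k)))).card = (2 ^ (n - k)) ^ d := by simp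
    rw [← e]
    refine Finset.card_le_card_of_injOn (fun x i => (⟨(x i : ℕ) % 2 ^ (n - k),
      Nat.mod_lt _ (by positivity)⟩ : Fin (2 ^ (n - k)))) (by intro x _; simp) ?_
    intro x hx y hy hxy
    simp only [cube, coe_filter, mem_univ, true_and, Set.mem_ofPred_eq] at hx hy
    funext i
    have h1 := congrArg Fin.val (congrFun hxy i)
    simp only at h1
    ext
    rw [← Nat.div_add_mod (x i : ℕ) (2 ^ (n - k)), ← Nat.div_add_mod (y i : ℕ) (2 ^ (n - k)),
      hx i, hy i, h1]
  rw [Finset.univ_inter]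
  unfold Vol
  rw [div_le_div_iff₀ (by positivity) (by positivity), one_mul]
  have : (cube n d k j).card * 2 ^ (k * d) ≤ 2 ^ (n * d) := by
    refine (Nat.mul_le_mul_right _ hc).trans (le_of_eq ?_)
    rw [← pow_mul, ← pow_add, ← add_mul, Nat.sub_add_cancel hk]
  exact_mod_cast this

/-- the functional -/
def Phi (n d : ℕ) (f : GridPt n d → ℝ) : ℝ :=
  ∑ k ∈ Finset.Icc 8 n, ∫ ω, |∑ x, f x * nuMeas n d k {x} ω| ∂(prodMeasure d k)

lemma Phi_integrable (n d k : ℕ) (f : GridPt n d → ℝ) :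
    Integrable (fun ω => |∑ x, f x * nuMeas n d k {x} ω|) (prodMeasure d k) := by
  simp_rw [lin_form]
  exact integrable_abs_lin d k _

lemma Phi_add (n d : ℕ) (f g : GridPt n d → ℝ) :
    Phi n d (fun x => f x + g x) ≤ Phi n d f + Phi n d g := by
  unfold Phi
  rw [← Finset.sum_add_distrib]
  refine Finset.sum_le_sum fun k _ => ?_
  rw [← integral_add (Phi_integrable n d k f) (Phi_integrable n d k g)]
  refine integral_mono (Phi_integrable n d k _)
    ((Phi_integrable n d k f).add (Phi_integrable n d k g)) ?_
  intro ω
  simp only [add_mul, Finset.sum_add_distrib]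
  exact abs_add_le _ _

lemma Phi_smul (n d : ℕ) (c : ℝ) (f : GridPt n d → ℝ) (hc : 0 ≤ c) :
    Phi n d (fun x => c * f x) ≤ c * Phi n d f := by
  unfold Phi
  rw [Finset.mul_sum]
  refine Finset.sum_le_sum fun k _ => ?_
  rw [← integral_const_mul]
  refine le_of_eq ?_
  congr 1
  funext ω
  simp_rw [mul_assoc]
  rw [← Finset.mul_sum, abs_mul, abs_of_nonneg hc]

lemma Phi_const (n d : ℕ) (c : ℝ) : Phi n d (fun _ => c) ≤ 0 := by
  unfold Phi
  simp_rw [lin_form, acoef_const]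
  simp

lemma Phi_compl (n d : ℕ) (A : Finset (GridPt n d)) :
    Phi n d (fun x => if x ∈ Aᶜ then 1 else 0) = Phi n d (fun x => if x ∈ A then 1 else 0) := by
  unfold Phi
  refine Finset.sum_congr rfl fun k _ => ?_
  congr 1
  funext ω
  rw [lin_form, lin_form, ← abs_neg, ← Finset.sum_neg_distrib]
  congr 1
  refine Finset.sum_congr rfl fun j _ => ?_
  rw [acoef_ind, acoef_ind, vol_compl]
  have := vol_compl n d A Finset.univ
  simp only [Finset.inter_univ, vol_univ] at this
  rw [this]
  ring

lemma Phi_small (n d : ℕ) (hd : 3 ≤ d) (A : Finset (GridPt n d)) (hA : Vol n d A ≤ 1 / 2) :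
    Phi n d (fun x => if x ∈ A then 1 else 0) ≤
      (2048 * (1 / ((edgePairs n d).card : ℝ)) * 2 ^ n) * ∑ e ∈ edgePairs n d,
      |(if e.2 ∈ A then (1:ℝ) else 0) - (if e.1 ∈ A then (1:ℝ) else 0)| := by
  rcases A.eq_empty_or_nonempty with rfl | hne
  · simpa using Phi_const n d 0
  set v := Vol n d A with hv
  have hcard : (0:ℝ) < A.card := by exact_mod_cast hne.card_pos
  have hv0 : 0 < v := by rw [hv]; unfold Vol; positivity
  obtain ⟨s, hs, hsv⟩ : ∃ s : ℝ, 0 < s ∧ s ^ d = v⁻¹ :=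
    ⟨(v⁻¹) ^ ((d:ℝ)⁻¹), by positivity, Real.rpow_inv_natCast_pow (by positivity) (by omega)⟩
  have hvA : v * (2 ^ n) ^ d = A.card := by
    rw [hv]; unfold Vol; rw [← pow_mul]; field_simp
  have hiso := iso n d A s hs (by rw [hsv, ← hvA]; field_simp)
  set B := ∑ e ∈ edgePairs n d,
      |(if e.2 ∈ A then (1:ℝ) else 0) - (if e.1 ∈ A then (1:ℝ) else 0)| with hB
  have hB0 : 0 ≤ B := by positivity
  have hpp := pp_pos d
  set a : (k : ℕ) → CubeIdx d k → ℝ := fun k j =>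
    acoef n d k (fun x => if x ∈ A then 1 else 0) j with ha
  have ha1 : ∀ k, ∑ j, |a k j| ≤ 2 * v := by
    intro k
    calc ∑ j, |a k j| ≤ ∑ j, (Vol n d (A ∩ cube n d k j) +
          Vol n d (Finset.univ ∩ cube n d k j) * v) := by
          refine Finset.sum_le_sum fun j _ => ?_
          simp only [ha]; rw [acoef_ind]
          refine (abs_sub _ _).trans (le_of_eq ?_)
          rw [abs_of_nonneg (vol_nonneg _ _ _),
            abs_of_nonneg (mul_nonneg (vol_nonneg _ _ _) (vol_nonneg _ _ _))]
      _ ≤ 2 * v := by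
          rw [Finset.sum_add_distrib, ← Finset.sum_mul]
          have h1 := vol_cubes n d k A
          have h2 := vol_cubes n d k Finset.univ
          rw [vol_univ] at h2
          nlinarith
  have ha2 : ∀ k ≤ n, ∀ j, |a k j| ≤ 1 / 2 ^ (k * d) := by
    intro k hk j
    have h1 := vol_cube_le n d k hk j
    have h2 := vol_mono n d (Finset.inter_subset_inter_right (u := cube n d k j) (Finset.subset_univ A))
    have h3 := vol_nonneg n d (A ∩ cube n d k j)
    have h4 := vol_nonneg n d (Finset.univ ∩ cube n d k j)
    simp only [ha]; rw [acoef_ind, ← hv, abs_le]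
    constructor <;> nlinarith
  have hmain : Phi n d (fun x => if x ∈ A then 1 else 0) ≤ 2048 * (v * (s - 1)) := by
    unfold Phi
    refine aux_num n d hd v s hv0 hA hs (by rw [hsv]; field_simp) _ ?_ ?_
    · intro k hk
      simp_rw [lin_form]
      refine (lin_L1 d k _).trans ?_
      calc pp d * ∑ j, |(pp d)⁻¹ * 2 ^ k * a k j| = 2 ^ k * ∑ j, |a k j| := by
            rw [Finset.mul_sum, Finset.mul_sum]
            refine Finset.sum_congr rfl fun j _ => ?_
            rw [abs_mul, abs_of_nonneg (by positivity)]
            field_simp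
        _ ≤ _ := by gcongr; exact ha1 k
    · intro k hk
      simp_rw [lin_form]
      refine (lin_L2 d k _).trans ?_
      have hk' := (Finset.mem_Icc.1 hk).2
      calc pp d * ∑ j, ((pp d)⁻¹ * 2 ^ k * a k j) ^ 2
          = (2 ^ k) ^ 2 * (pp d)⁻¹ * ∑ j, a k j ^ 2 := by
            rw [Finset.mul_sum, Finset.mul_sum]
            refine Finset.sum_congr rfl fun j _ => ?_
            field_simp
        _ ≤ (2 ^ k) ^ 2 * (pp d)⁻¹ * ∑ j, (1 / 2 ^ (k * d)) * |a k j| := by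
            gcongr with j
            rw [← sq_abs, sq]
            gcongr
            exact ha2 k hk' j
        _ ≤ (2 ^ k) ^ 2 * (pp d)⁻¹ * ((1 / 2 ^ (k * d)) * (2 * v)) := by
            rw [← Finset.mul_sum]
            gcongr; exact ha1 k
        _ = _ := by unfold pp; rw [inv_inv]; ring
  refine hmain.trans ?_
  have hd0 : (0:ℝ) < d := by exact_mod_cast (by omega : 0 < d)
  have hN : (0:ℝ) < (2 ^ n) ^ d := by positivity
  have key : (d * (2 ^ n) ^ d) * (v * (s - 1)) ≤ 2 ^ n * B := by
    refine le_trans (le_of_eq ?_) hiso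
    rw [← hvA]; ring
  by_cases hE : (edgePairs n d).card = 0
  · have hB1 : B = 0 := by
      rw [hB, Finset.card_eq_zero.1 hE, Finset.sum_empty]
    rw [hB1, mul_zero] at key ⊢
    have : v * (s - 1) ≤ 0 := by
      by_contra hcon
      push Not at hcon
      have : 0 < (d * (2 ^ n) ^ d : ℝ) * (v * (s - 1)) := by positivity
      linarith
    linarith
  · have hE0 : (0:ℝ) < (edgePairs n d).card := by exact_mod_cast Nat.pos_of_ne_zero hE
    have hEle : ((edgePairs n d).card : ℝ) ≤ d * (2 ^ n) ^ d := by exact_mod_cast edge_card n d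
    have : v * (s - 1) ≤ 1 / ((edgePairs n d).card : ℝ) * (2 ^ n * B) := by
      rw [one_div, inv_mul_eq_div, le_div_iff₀ hE0]
      by_cases h0 : 0 ≤ v * (s - 1)
      · nlinarith
      · push Not at h0
        have : v * (s - 1) * ((edgePairs n d).card : ℝ) ≤ 0 :=
          mul_nonpos_of_nonpos_of_nonneg h0.le hE0.le
        have : 0 ≤ 2 ^ n * B := by positivity
        linarith
    linarith

lemma Phi_set (n d : ℕ) (hd : 3 ≤ d) (A : Finset (GridPt n d)) :
    Phi n d (fun x => if x ∈ A then 1 else 0) ≤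
      (2048 * (1 / ((edgePairs n d).card : ℝ)) * 2 ^ n) * ∑ e ∈ edgePairs n d,
      |(if e.2 ∈ A then (1:ℝ) else 0) - (if e.1 ∈ A then (1:ℝ) else 0)| := by
  by_cases hA : Vol n d A ≤ 1 / 2
  · exact Phi_small n d hd A hA
  · have hc := vol_compl n d A Finset.univ
    simp only [Finset.inter_univ, vol_univ] at hc
    have h := Phi_small n d hd Aᶜ (by linarith)
    rw [Phi_compl] at h
    refine h.trans (le_of_eq ?_)
    congr 1
    refine Finset.sum_congr rfl fun e _ => ?_
    by_cases h : e.1 ∈ A <;> by_cases h' : e.2 ∈ A <;> simp [h, h']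

/-- Sobolev inequality for the random measures `ν_k`: there is a universal constant `C`
(independent of `n, d`) with `∑_{k=8}^n E[|∫ f dν_k|] ≤ C·‖f‖_{W^{1,1}}`. Here
`∫ f dν_k = ∑_x f(x)·ν_k({x})`. -/
theorem sobolev_inequality :
    ∃ C : ℝ, ∀ (n d : ℕ), 8 ≤ n → 3 ≤ d → ∀ f : GridPt n d → ℝ,
      ∑ k ∈ Finset.Icc 8 n,
          ∫ ω, |∑ x, f x * nuMeas n d k {x} ω| ∂(prodMeasure d k)
        ≤ C * W11 n d f := by
  refine ⟨2048, fun n d _ hd f => ?_⟩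
  have h := aux_coarea (edgePairs n d) (Phi n d) (Phi_add n d) (Phi_smul n d) (Phi_const n d)
    (2048 * (1 / ((edgePairs n d).card : ℝ)) * 2 ^ n) (by positivity) (Phi_set n d hd) f
  refine le_trans h (le_of_eq ?_)
  unfold W11
  rw [← Finset.mul_sum]
  ring
end
end

section
/- Let n, d be integers with d ≥ 3 and n ≥ 1, and let A ⊆ [2^n]^d satisfy Vol(A) ≤ 2^{−2d}. Then Vol(A)^{1−1/d} ≤ 2·Per(A). -/
open MeasureTheory Finset

noncomputable section

/-- The edge boundary `∂A` of a subset `A` of the grid. -/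
def bdry (n d : ℕ) (A : Finset (GridPt n d)) : Finset (GridPt n d × GridPt n d) :=
  (edgePairs n d).filter (fun e => (e.1 ∈ A ∧ e.2 ∉ A) ∨ (e.1 ∉ A ∧ e.2 ∈ A))

/-- The normalized perimeter `Per(A) = (1/d)·2^{-n(d-1)}·|∂A|`. -/
def Per (n d : ℕ) (A : Finset (GridPt n d)) : ℝ :=
  (1/(d:ℝ)) * ((2:ℝ)^(n*(d-1)))⁻¹ * ((bdry n d A).card : ℝ)

open scoped ENNReal in
lemma holder_fin {α ι : Type*} [Fintype α] [Fintype ι] (f : ι → α → ℝ≥0∞) (q : ℝ) (hq : 0 ≤ q)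
    (h1 : (Fintype.card ι : ℝ) * q = 1) :
    ∑ x, ∏ i, f i x ^ q ≤ ∏ i, (∑ x, f i x) ^ q := by
  let _ : MeasurableSpace α := ⊤
  have := ENNReal.lintegral_prod_norm_pow_le (μ := Measure.count) (Finset.univ : Finset ι) (f := f)
    (fun i _ => (measurable_from_top).aemeasurable) (p := fun _ => q) (by simpa using h1)
    (fun _ _ => hq)
  simpa [lintegral_count, tsum_fintype] using this

/-- The projection forgetting coordinate `i`. -/
def dropC {α : Type*} {d : ℕ} (i : Fin (d+1)) (v : Fin (d+1) → α) : Fin d → α :=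
  fun j => v (i.succAbove j)

/-- Slice at first coordinate. -/
def headSlice {α : Type*} [Fintype α] [DecidableEq α] {d : ℕ} (A : Finset (Fin (d+1) → α)) (x : α) :
    Finset (Fin d → α) :=
  Finset.univ.filter (fun w => (Fin.cons x w : Fin (d+1) → α) ∈ A)

lemma card_slices {α : Type*} [Fintype α] [DecidableEq α] {d : ℕ} (A : Finset (Fin (d+1) → α)) :
    ∑ x, (headSlice A x).card = A.card := by
  rw [Finset.card_eq_sum_card_fiberwise (f := fun v => v 0) (t := Finset.univ) (by simp)]
  refine Finset.sum_congr rfl fun x _ => ?_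
  refine Finset.card_bij (fun w _ => (Fin.cons x w : Fin (d+1) → α)) ?_ ?_ ?_
  · intro w hw
    simpa [headSlice] using hw
  · intro a _ b _ h
    exact (Fin.cons_injective2 h).2
  · intro v hv
    simp only [Finset.mem_filter] at hv
    refine ⟨Fin.tail v, ?_, ?_⟩
    · simp [headSlice, ← hv.2, hv.1]
    · simp [← hv.2]

lemma slice_image {α : Type*} [Fintype α] [DecidableEq α] {d : ℕ}
    (A : Finset (Fin (d+2) → α)) (i : Fin (d+1)) (x : α) :
    (headSlice A x).image (dropC i) ⊆ headSlice (A.image (dropC i.succ)) x := by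
  intro w hw
  simp only [Finset.mem_image, headSlice, Finset.mem_filter, Finset.mem_univ, true_and] at hw ⊢
  obtain ⟨u, hu, rfl⟩ := hw
  refine ⟨_, hu, ?_⟩
  funext j
  refine Fin.cases ?_ (fun j => ?_) j
  · simp [dropC]
  · simp [dropC]

lemma slice_sub {α : Type*} [Fintype α] [DecidableEq α] {d : ℕ}
    (A : Finset (Fin (d+1) → α)) (x : α) :
    headSlice A x ⊆ A.image (dropC 0) := by
  intro w hw
  simp only [Finset.mem_image, headSlice, Finset.mem_filter, Finset.mem_univ, true_and] at hw ⊢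
  refine ⟨_, hw, ?_⟩
  funext j
  simp [dropC]

open scoped ENNReal in
/-- Loomis–Whitney inequality. -/
lemma loomis_whitney {α : Type*} [Fintype α] [DecidableEq α] (d : ℕ) :
    ∀ (A : Finset (Fin (d+1) → α)), A.Nonempty →
      A.card ^ d ≤ ∏ i, (A.image (dropC i)).card := by
  induction d with
  | zero =>
    intro A hA
    simp [hA]
  | succ d ih =>
    intro A hA
    set q : ℝ := 1 / ((d:ℝ)+1) with hq
    have hd0 : (0:ℝ) < (d:ℝ)+1 := by positivity
    have hq0 : 0 ≤ q := by positivity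
    set p0 : ℝ≥0∞ := ((A.image (dropC 0)).card : ℝ≥0∞) with hp0
    have key : ∀ x, ((headSlice A x).card : ℝ≥0∞) ≤
        p0 ^ q * ∏ i : Fin (d+1), (((headSlice A x).image (dropC i)).card : ℝ≥0∞) ^ q := by
      intro x
      rcases (headSlice A x).eq_empty_or_nonempty with h | h
      · simp [h]
      · have h1 := ih _ h
        have h2 := Finset.card_le_card (slice_sub A x)
        have h3 : (headSlice A x).card ^ (d+1) ≤ (A.image (dropC 0)).card *
            ∏ i : Fin (d+1), ((headSlice A x).image (dropC i)).card := by
          rw [pow_succ, mul_comm]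
          exact Nat.mul_le_mul h2 h1
        have h4 : ((headSlice A x).card : ℝ≥0∞) ^ (d+1) ≤ p0 *
            ∏ i : Fin (d+1), (((headSlice A x).image (dropC i)).card : ℝ≥0∞) := by
          rw [hp0]; exact_mod_cast h3
        have h5 := ENNReal.rpow_le_rpow h4 hq0
        rw [ENNReal.mul_rpow_of_nonneg _ _ hq0, ← ENNReal.prod_rpow_of_nonneg hq0,
          ← ENNReal.rpow_natCast, ← ENNReal.rpow_mul] at h5
        have : (((d+1 : ℕ) : ℝ) * q) = 1 := by rw [hq]; push_cast; field_simp
        rwa [this, ENNReal.rpow_one] at h5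
    have hsum : (A.card : ℝ≥0∞) ≤ p0 ^ q *
        ∏ i : Fin (d+1), ((A.image (dropC i.succ)).card : ℝ≥0∞) ^ q := by
      rw [← card_slices A]
      push_cast
      refine (Finset.sum_le_sum fun x _ => key x).trans ?_
      rw [← Finset.mul_sum]
      refine mul_le_mul_right ?_ _
      refine (holder_fin (fun (i : Fin (d+1)) x =>
        (((headSlice A x).image (dropC i)).card : ℝ≥0∞)) q hq0
        (by rw [hq]; simp; field_simp)).trans ?_
      refine Finset.prod_le_prod' fun i _ => ENNReal.rpow_le_rpow ?_ hq0
      rw [← card_slices (A.image (dropC i.succ))]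
      push_cast
      refine Finset.sum_le_sum fun x _ => ?_
      exact_mod_cast Finset.card_le_card (slice_image A i x)
    have h6 : (A.card : ℝ≥0∞) ^ (d+1) ≤ p0 *
        ∏ i : Fin (d+1), ((A.image (dropC i.succ)).card : ℝ≥0∞) := by
      have h7 := pow_le_pow_left' hsum (d+1)
      rw [ENNReal.prod_rpow_of_nonneg hq0, ← ENNReal.mul_rpow_of_nonneg _ _ hq0,
        ← ENNReal.rpow_natCast (_ ^ q), ← ENNReal.rpow_mul] at h7
      have : (q * ((d+1 : ℕ) : ℝ)) = 1 := by rw [hq]; push_cast; field_simp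
      rwa [this, ENNReal.rpow_one] at h7
    rw [Fin.prod_univ_succ]
    rw [hp0] at h6
    exact_mod_cast h6

/-- Lines in direction `i` entirely contained in `A`. -/
def fullL {N d : ℕ} (A : Finset (Fin (d+1) → Fin N)) (i : Fin (d+1)) : Finset (Fin d → Fin N) :=
  Finset.univ.filter (fun w => ∀ x, (i.insertNth x w : Fin (d+1) → Fin N) ∈ A)

lemma fullL_card {N d : ℕ} (A : Finset (Fin (d+1) → Fin N)) (i : Fin (d+1)) :
    (fullL A i).card * N ≤ A.card := by
  have : ((fullL A i) ×ˢ (Finset.univ : Finset (Fin N))).card ≤ A.card := by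
    refine Finset.card_le_card_of_injOn
      (fun p => (i.insertNth p.2 p.1 : Fin (d+1) → Fin N)) ?_ ?_
    · intro p hp
      simp only [Finset.coe_product, Set.mem_prod, fullL, Finset.mem_coe, Finset.mem_filter] at hp
      exact hp.1.2 p.2
    · intro p _ p' _ h
      have := Fin.insertNth_injective2 h
      exact Prod.ext this.2 this.1
  simpa using this

lemma exists_step {N : ℕ} (P : Fin N → Prop) (a b : Fin N) (ha : P a) (hb : ¬ P b) :
    ∃ x y : Fin N, (y : ℕ) = x + 1 ∧ ((P x ∧ ¬ P y) ∨ (¬ P x ∧ P y)) := by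
  by_contra hcon
  push Not at hcon
  have hN : 0 < N := a.pos
  have : ∀ k (hk : k < N), (P ⟨k, hk⟩ ↔ P ⟨0, hN⟩) := by
    intro k
    induction k with
    | zero => intro _; rfl
    | succ k ih =>
      intro hk
      rw [← ih (by omega)]
      have := hcon ⟨k, by omega⟩ ⟨k+1, hk⟩ rfl
      tauto
  exact hb ((this b b.2).2 ((this a a.2).1 ha))

/-- Boundary edges in direction `i`. -/
def bdryDir (n d : ℕ) (A : Finset (GridPt n d)) (i : Fin d) :
    Finset (GridPt n d × GridPt n d) :=
  Finset.univ.filter (fun e => (((e.2 i : ℕ) = (e.1 i : ℕ) + 1) ∧ ∀ j, j ≠ i → e.2 j = e.1 j) ∧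
    ((e.1 ∈ A ∧ e.2 ∉ A) ∨ (e.1 ∉ A ∧ e.2 ∈ A)))

lemma bdry_sum (n d : ℕ) (A : Finset (GridPt n d)) :
    ∑ i, (bdryDir n d A i).card ≤ (bdry n d A).card := by
  rw [← Finset.card_biUnion]
  · refine Finset.card_le_card ?_
    intro e he
    simp only [Finset.mem_biUnion, bdryDir, Finset.mem_filter, Finset.mem_univ, true_and] at he
    obtain ⟨i, h1, h2⟩ := he
    simp only [bdry, edgePairs, Finset.mem_filter, Finset.mem_univ, true_and]
    exact ⟨⟨i, h1⟩, h2⟩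
  · intro i _ j _ hij
    rw [Function.onFun, Finset.disjoint_left]
    intro e he he'
    simp only [bdryDir, Finset.mem_filter, Finset.mem_univ, true_and] at he he'
    have h1 := he.1.1
    have h2 := he'.1.2 i hij
    rw [h2] at h1
    omega

lemma bdryDir_card (n d : ℕ) (A : Finset (GridPt n (d+1))) (i : Fin (d+1)) :
    (A.image (dropC i)).card ≤ (bdryDir n (d+1) A i).card + (fullL A i).card := by
  have hsub : A.image (dropC i) ⊆
      (bdryDir n (d+1) A i).image (fun e => dropC i e.1) ∪ fullL A i := by
    intro w hw
    by_cases hf : w ∈ fullL A i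
    · exact Finset.mem_union_right _ hf
    refine Finset.mem_union_left _ ?_
    simp only [fullL, Finset.mem_filter, Finset.mem_univ, true_and, not_forall] at hf
    obtain ⟨b, hb⟩ := hf
    obtain ⟨v, hv, rfl⟩ := Finset.mem_image.1 hw
    have hva : (i.insertNth (v i) (dropC i v) : Fin (d+1) → Fin (2^n)) = v :=
      Fin.insertNth_self_removeNth i v
    obtain ⟨x, y, hxy, hP⟩ := exists_step
      (fun x => (i.insertNth x (dropC i v) : Fin (d+1) → Fin (2^n)) ∈ A) (v i) b
      (by rw [hva]; exact hv) hb
    refine Finset.mem_image.2 ⟨(i.insertNth x (dropC i v), i.insertNth y (dropC i v)), ?_, ?_⟩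
    · simp only [bdryDir, Finset.mem_filter, Finset.mem_univ, true_and]
      refine ⟨⟨by simpa using hxy, ?_⟩, hP⟩
      intro j hj
      obtain ⟨k, rfl⟩ := Fin.exists_succAbove_eq hj
      simp
    · funext k
      simp [dropC]
  refine (Finset.card_le_card hsub).trans ((Finset.card_union_le _ _).trans ?_)
  gcongr
  exact Finset.card_image_le

/-- Isoperimetric inequality, small sets: if `Vol(A) ≤ 2^{-2d}` then
`Vol(A)^{1-1/d} ≤ 2·Per(A)`. -/
theorem isoperimetric_small (n d : ℕ) (hn : 1 ≤ n) (hd : 3 ≤ d)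
    (A : Finset (GridPt n d)) (hA : Vol n d A ≤ ((2:ℝ)^(2*d))⁻¹) :
    Vol n d A ^ ((1:ℝ) - 1/(d:ℝ)) ≤ 2 * Per n d A := by
  obtain ⟨m, rfl⟩ : ∃ m, d = m + 1 := ⟨d - 1, by omega⟩
  have hd0 : (0:ℝ) < ((m+1 : ℕ) : ℝ) := by positivity
  have hm0 : (0:ℝ) < (m:ℝ) + 1 := by positivity
  have hexp : (1:ℝ) - 1/((m+1 : ℕ):ℝ) = (m:ℝ) / ((m:ℝ)+1) := by
    push_cast; field_simp; ring
  rw [hexp]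
  have hmpos : (0:ℝ) < m := by
    have : 0 < m := by omega
    exact_mod_cast this
  rcases A.eq_empty_or_nonempty with rfl | hne
  · have : (m:ℝ) / ((m:ℝ)+1) ≠ 0 := by positivity
    simp only [Vol, Per, Finset.card_empty, Nat.cast_zero, zero_div]
    rw [Real.zero_rpow this]
    positivity
  set a : ℝ := (A.card : ℝ) with ha
  have hapos : 0 < a := by
    rw [ha]; exact_mod_cast hne.card_pos
  set N : ℝ := (2:ℝ)^n with hN
  have hNpos : 0 < N := by positivity
  -- the side length of a cube of the same volume
  set s : ℝ := a ^ (1 / ((m:ℝ)+1)) with hs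
  have hspos : 0 < s := by positivity
  have hsa : s ^ (m+1) = a := by
    rw [hs, ← Real.rpow_natCast, ← Real.rpow_mul hapos.le]
    push_cast
    rw [one_div_mul_cancel hm0.ne', Real.rpow_one]
  have hNN : (2:ℝ)^(n*(m+1)) = N^(m+1) := by rw [hN, pow_mul]
  have hNN' : (2:ℝ)^(n*(m+1-1)) = N^m := by rw [hN, ← pow_mul]; simp
  have hsN : s / N ≤ 1/4 := by
    have h1 : (s/N)^(m+1) ≤ (1/4:ℝ)^(m+1) := by
      rw [Vol, hNN, ← ha, ← hsa, ← div_pow] at hA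
      refine hA.trans (le_of_eq ?_)
      rw [pow_mul, ← inv_pow]; norm_num
    exact (pow_le_pow_iff_left₀ (by positivity) (by norm_num) (by omega)).1 h1
  have hvol : Vol n (m+1) A ^ ((m:ℝ) / ((m:ℝ)+1)) = s^m / N^m := by
    rw [Vol, hNN, ← ha, ← hsa, ← div_pow, ← Real.rpow_natCast (s/N) (m+1),
      ← Real.rpow_mul (by positivity), ← div_pow, ← Real.rpow_natCast (s/N) m]
    congr 1
    push_cast
    field_simp
  rw [hvol, Per, hNN']
  -- the sum of the projections is large
  set p : Fin (m+1) → ℝ := fun i => ((A.image (dropC i)).card : ℝ) with hp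
  have hp0 : ∀ i, 0 ≤ p i := fun i => by positivity
  have hLW : a ^ m ≤ ∏ i, p i := by
    have := loomis_whitney m A hne
    simp only [hp, ha]
    exact_mod_cast this
  have hAG : s^m * ((m:ℝ)+1) ≤ ∑ i, p i := by
    have h1 := Real.geom_mean_le_arith_mean_weighted Finset.univ (fun _ => 1/((m:ℝ)+1)) p
      (fun _ _ => by positivity) (by simp; field_simp) (fun i _ => hp0 i)
    rw [Real.finsetProd_rpow _ _ (fun i _ => hp0 i), ← Finset.mul_sum] at h1
    have h2 : s^m ≤ (∏ i, p i) ^ (1/((m:ℝ)+1)) := by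
      refine le_trans (le_of_eq ?_) (Real.rpow_le_rpow (by positivity) hLW (by positivity))
      rw [hs, ← Real.rpow_natCast, ← Real.rpow_natCast, ← Real.rpow_mul hapos.le,
        ← Real.rpow_mul hapos.le, mul_comm]
    have h3 := h2.trans h1
    rw [one_div, inv_mul_eq_div, le_div_iff₀ hm0] at h3
    exact h3
  have hfull : ∀ i, ((fullL A i).card : ℝ) ≤ s^m / 4 := by
    intro i
    have h1 : ((fullL A i).card : ℝ) * N ≤ a := by
      have := fullL_card A i
      rw [ha, hN]; exact_mod_cast this
    have h2 : ((fullL A i).card : ℝ) ≤ a / N := (le_div_iff₀ hNpos).2 h1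
    refine h2.trans ?_
    rw [← hsa, pow_succ, mul_div_assoc]
    have : s^m * (s/N) ≤ s^m * (1/4) := by gcongr
    linarith
  have hdir : ∀ i, p i ≤ ((bdryDir n (m+1) A i).card : ℝ) + s^m/4 := by
    intro i
    have h1 : p i ≤ ((bdryDir n (m+1) A i).card : ℝ) + ((fullL A i).card : ℝ) := by
      simp only [hp]
      exact_mod_cast bdryDir_card n m A i
    linarith [hfull i]
  have hsumb : ∑ i, ((bdryDir n (m+1) A i).card : ℝ) ≤ ((bdry n (m+1) A).card : ℝ) := by
    exact_mod_cast bdry_sum n (m+1) A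
  have htot : ∑ i, p i ≤ ∑ i, ((bdryDir n (m+1) A i).card : ℝ) + ((m:ℝ)+1) * (s^m/4) := by
    refine (Finset.sum_le_sum fun i _ => hdir i).trans (le_of_eq ?_)
    rw [Finset.sum_add_distrib]
    simp
  have hspm : 0 < s^m := by positivity
  have hfin : s^m * ((m:ℝ)+1) ≤ 2 * ((bdry n (m+1) A).card : ℝ) := by
    nlinarith
  have hNm : 0 < N^m := by positivity
  push_cast
  rw [div_le_iff₀ hNm]
  have : 2 * (1 / ((m:ℝ)+1) * (N^m)⁻¹ * ((bdry n (m+1) A).card : ℝ)) * N^m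
      = 2 * ((bdry n (m+1) A).card : ℝ) / ((m:ℝ)+1) := by
    field_simp
  rw [this, le_div_iff₀ hm0]
  exact hfin
end
end

section
/- Let n, d be integers with d ≥ 3 and n ≥ 1, and let A ⊆ [2^n]^d satisfy Vol(A) ≤ 1/2. Then Vol(A)^{1−1/d} ≤ 2d·Per(A). -/
open MeasureTheory Finset

noncomputable section

/-- Projection along direction `i`, with the `i`-th coordinate reset to `a0`. -/
def projA {α : Type} [DecidableEq α] (a0 : α) {d : ℕ} (i : Fin d) (A : Finset (Fin d → α)) :
    Finset (Fin d → α) := A.image (fun x => Function.update x i a0)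

def sliceA {α : Type} [DecidableEq α] [Fintype α] {d : ℕ} (A : Finset (Fin (d+1) → α)) (t : α) :
    Finset (Fin d → α) := Finset.univ.filter (fun y => (Fin.cons t y : Fin (d+1) → α) ∈ A)

lemma slice_card_sum {α : Type} [DecidableEq α] [Fintype α] {d : ℕ}
    (A : Finset (Fin (d+1) → α)) : A.card = ∑ t, (sliceA A t).card := by
  rw [Finset.card_eq_sum_card_fiberwise (f := fun x => x 0) (t := Finset.univ) (by simp)]
  refine Finset.sum_congr rfl (fun t _ => ?_)
  symm
  refine Finset.card_bij (fun y _ => (Fin.cons t y : Fin (d+1) → α)) ?_ ?_ ?_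
  · intro y hy
    simpa [sliceA] using hy
  · intro y _ z _ h
    exact (Fin.cons_right_injective (α := fun _ => α) t h)
  · intro x hx
    simp only [Finset.mem_filter] at hx
    have hx' : (Fin.cons t (Fin.tail x) : Fin (d+1) → α) = x := by
      rw [← hx.2]; exact Fin.cons_self_tail x
    refine ⟨Fin.tail x, ?_, hx'⟩
    simp only [sliceA, Finset.mem_filter, Finset.mem_univ, true_and]
    rw [hx']; exact hx.1

lemma slice_le_proj {α : Type} [DecidableEq α] [Fintype α] (a0 : α) {d : ℕ}
    (A : Finset (Fin (d+1) → α)) (t : α) : (sliceA A t).card ≤ (projA a0 0 A).card := by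
  refine Finset.card_le_card_of_injOn (fun y => (Fin.cons a0 y : Fin (d+1) → α)) ?_ ?_
  · intro y hy
    have hy' : (Fin.cons t y : Fin (d+1) → α) ∈ A := by simpa [sliceA] using hy
    have : (Fin.cons a0 y : Fin (d+1) → α) ∈ projA a0 0 A :=
      Finset.mem_image.2 ⟨_, hy', Fin.update_cons_zero (α := fun _ => α) t y a0⟩
    exact this
  · intro y _ z _ h
    exact (Fin.cons_right_injective (α := fun _ => α) a0 h)

lemma proj_succ {α : Type} [DecidableEq α] [Fintype α] (a0 : α) {d : ℕ}
    (A : Finset (Fin (d+1) → α)) (i : Fin d) :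
    ∑ t, (projA a0 i (sliceA A t)).card ≤ (projA a0 i.succ A).card := by
  rw [Finset.card_eq_sum_card_fiberwise (s := projA a0 i.succ A)
    (f := fun x => x 0) (t := Finset.univ) (by simp)]
  refine Finset.sum_le_sum (fun t _ => ?_)
  refine Finset.card_le_card_of_injOn (fun y => (Fin.cons t y : Fin (d+1) → α)) ?_ ?_
  · intro y hy
    obtain ⟨z, hz, rfl⟩ := Finset.mem_image.1 (Finset.mem_coe.1 hy)
    have hz' : (Fin.cons t z : Fin (d+1) → α) ∈ A := by simpa [sliceA] using hz
    have : (Fin.cons t (Function.update z i a0) : Fin (d+1) → α) ∈ projA a0 i.succ A :=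
      Finset.mem_image.2 ⟨_, hz', (Fin.cons_update (α := fun _ => α) t z i a0).symm⟩
    exact Finset.mem_coe.2 (Finset.mem_filter.2 ⟨this, rfl⟩)
  · intro y _ z _ h
    exact (Fin.cons_right_injective (α := fun _ => α) t h)

lemma amgm_step (D M a : ℝ) (hD : 1 ≤ D) (hM : 0 < M) (ha : 0 < a) :
    (D + 1) * a ^ (1 - 1/(D+1)) ≤ M + D * (a * M ^ (-(1/D))) := by
  have h := Real.geom_mean_le_arith_mean2_weighted (w₁ := 1/(D+1)) (w₂ := D/(D+1))
    (p₁ := M) (p₂ := a * M ^ (-(1/D))) (by positivity) (by positivity) hM.le (by positivity)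
    (by field_simp; ring)
  have e : M ^ (1/(D+1)) * (a * M ^ (-(1/D))) ^ (D/(D+1)) = a ^ (1 - 1/(D+1)) := by
    rw [Real.mul_rpow ha.le (by positivity), ← Real.rpow_mul hM.le, mul_left_comm,
      ← Real.rpow_add hM]
    have h1 : 1/(D+1) + -(1/D) * (D/(D+1)) = 0 := by field_simp; ring
    have h2 : D/(D+1) = 1 - 1/(D+1) := by field_simp; ring
    rw [h1, h2]; simp
  rw [e] at h
  calc (D + 1) * a ^ (1 - 1/(D+1))
      ≤ (D+1) * (1/(D+1) * M + D/(D+1) * (a * M ^ (-(1/D)))) := by gcongr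
    _ = _ := by field_simp

lemma loomis_whitney_sum {α : Type} [DecidableEq α] [Fintype α] (a0 : α) (d : ℕ) :
    ∀ A : Finset (Fin (d+1) → α), A.Nonempty →
    ((d:ℝ)+1) * (A.card : ℝ) ^ ((1:ℝ) - 1/((d:ℝ)+1)) ≤ ∑ i, ((projA a0 i A).card : ℝ) := by
  induction d with
  | zero =>
    intro A hA
    have : 1 ≤ (projA a0 0 A).card := Finset.card_pos.2 (hA.image _)
    simpa using this
  | succ d ih =>
    intro A hA
    have hMn : 0 < (projA a0 0 A).card := Finset.card_pos.2 (hA.image _)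
    set M : ℝ := ((projA a0 0 A).card : ℝ) with hMdef
    have hM : 0 < M := by rw [hMdef]; exact_mod_cast hMn
    have ha : (0:ℝ) < A.card := by exact_mod_cast hA.card_pos
    set D : ℝ := (d:ℝ) + 1 with hDdef
    have hD : 1 ≤ D := by rw [hDdef]; have : (0:ℝ) ≤ d := Nat.cast_nonneg d; linarith
    have hcast : ((d+1 : ℕ) : ℝ) = D := by rw [hDdef]; push_cast; ring
    rw [hcast, Fin.sum_univ_succ]
    refine (amgm_step D M _ hD hM ha).trans ?_
    have h1 : ∀ t, D * (((sliceA A t).card : ℝ) * M ^ (-(1/D))) ≤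
        ∑ i, ((projA a0 i (sliceA A t)).card : ℝ) := by
      intro t
      rcases (sliceA A t).eq_empty_or_nonempty with h | h
      · rw [h]; simp [projA]
      · refine le_trans ?_ (ih _ h)
        have hs : (0:ℝ) < (sliceA A t).card := by exact_mod_cast h.card_pos
        have hsM : ((sliceA A t).card : ℝ) ≤ M := by
          rw [hMdef]; exact_mod_cast slice_le_proj a0 A t
        rw [sub_eq_add_neg, Real.rpow_add hs, Real.rpow_one]
        have hneg : -(1/D) ≤ 0 := by
          have : 0 ≤ 1/D := by positivity
          linarith
        have := Real.rpow_le_rpow_of_nonpos hs hsM hneg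
        gcongr
    have h2 : D * ((A.card : ℝ) * M ^ (-(1/D))) ≤
        ∑ t, ∑ i, ((projA a0 i (sliceA A t)).card : ℝ) := by
      rw [slice_card_sum A, Nat.cast_sum, Finset.sum_mul, Finset.mul_sum]
      exact Finset.sum_le_sum (fun t _ => h1 t)
    rw [Finset.sum_comm] at h2
    have h3 : ∑ i, ∑ t, ((projA a0 i (sliceA A t)).card : ℝ) ≤
        ∑ i : Fin (d+1), ((projA a0 i.succ A).card : ℝ) := by
      refine Finset.sum_le_sum (fun i _ => ?_)
      exact_mod_cast proj_succ a0 A i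
    linarith

/-- If a predicate on `Fin N` never changes between consecutive elements, it is constant. -/
lemma exists_change {N : ℕ} (P : Fin N → Prop) (s t : Fin N) (hs : P s) (ht : ¬ P t) :
    ∃ k l : Fin N, (l : ℕ) = k + 1 ∧ ((P k ∧ ¬ P l) ∨ (¬ P k ∧ P l)) := by
  by_contra! hcon
  have key : ∀ m (hm : m < N), P ⟨m, hm⟩ ↔ P ⟨0, by omega⟩ := by
    intro m
    induction m with
    | zero => intro hm; rfl
    | succ m ih =>
      intro hm
      rw [← ih (by omega)]
      have := hcon ⟨m, by omega⟩ ⟨m+1, hm⟩ rfl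
      tauto
  exact ht ((key t t.2).2 ((key s s.2).1 hs))

lemma full_card {α : Type} [DecidableEq α] [Fintype α] (a0 : α) {d : ℕ} (i : Fin d)
    (A : Finset (Fin d → α))
    [DecidablePred (fun p : Fin d → α => ∀ t, Function.update p i t ∈ A)] :
    ((projA a0 i A).filter (fun p => ∀ t, Function.update p i t ∈ A)).card * Fintype.card α
      ≤ A.card := by
  rw [← Finset.card_univ, ← Finset.card_product]
  refine Finset.card_le_card_of_injOn (fun q => Function.update q.1 i q.2) ?_ ?_
  · intro q hq
    simp only [Finset.coe_product, Set.mem_prod, Finset.mem_coe, Finset.mem_filter] at hq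
    exact hq.1.2 q.2
  · rintro ⟨p, t⟩ hp ⟨q, s⟩ hq h
    simp only [Finset.coe_product, Set.mem_prod, Finset.mem_coe, Finset.mem_filter] at hp hq
    obtain ⟨x, _, rfl⟩ := Finset.mem_image.1 hp.1.1
    obtain ⟨y, _, rfl⟩ := Finset.mem_image.1 hq.1.1
    simp only [Function.update_idem] at h
    have ht : t = s := by simpa using congrFun h i
    have := congrArg (fun z => Function.update z i a0) h
    simp only [Function.update_idem] at this
    rw [this, ht]

lemma bdry_ge {n d : ℕ} (A : Finset (GridPt n d)) (a0 : Fin (2^n)) :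
    ∑ i, ((projA a0 i A).filter (fun p => ¬ ∀ t, Function.update p i t ∈ A)).card
      ≤ (bdry n d A).card := by
  have hdisj : ∑ i, ((bdry n d A).filter (fun e => (e.2 i : ℕ) = (e.1 i : ℕ) + 1)).card
      ≤ (bdry n d A).card := by
    rw [← Finset.card_biUnion]
    · refine Finset.card_le_card ?_
      intro e he
      simp only [Finset.mem_biUnion, Finset.mem_filter] at he
      obtain ⟨_, _, h, _⟩ := he
      exact h
    · intro i _ j _ hij
      refine Finset.disjoint_left.2 ?_
      intro e he he'
      simp only [Finset.mem_filter, bdry, edgePairs, Finset.mem_univ, true_and] at he he'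
      obtain ⟨⟨⟨k, hk, hk'⟩, _⟩, hi⟩ := he
      have hj := he'.2
      by_cases h1 : i = k
      · have := hk' j (by rintro rfl; exact hij h1)
        rw [this] at hj; omega
      · have := hk' i h1
        rw [this] at hi; omega
  refine le_trans (Finset.sum_le_sum (fun i _ => ?_)) hdisj
  refine le_trans (Finset.card_le_card ?_)
    (Finset.card_image_le (f := fun e : GridPt n d × GridPt n d => Function.update e.1 i a0))
  intro p hp
  simp only [Finset.mem_filter, not_forall] at hp
  obtain ⟨hp, t, ht⟩ := hp
  obtain ⟨x, hx, rfl⟩ := Finset.mem_image.1 hp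
  simp only [Function.update_idem] at ht
  obtain ⟨k, l, hkl, h⟩ := exists_change (fun s => Function.update x i s ∈ A) (x i) t
    (by simpa using hx) ht
  refine Finset.mem_image.2 ⟨(Function.update x i k, Function.update x i l), ?_, by simp⟩
  simp only [bdry, edgePairs, Finset.mem_filter, Finset.mem_univ, true_and]
  refine ⟨⟨⟨i, by simpa using hkl, fun j hj => by simp [hj]⟩, h⟩, by simpa using hkl⟩

/-- Isoperimetric inequality, medium sets: if `Vol(A) ≤ 1/2` then
`Vol(A)^{1-1/d} ≤ 2d·Per(A)`. -/
theorem isoperimetric_medium (n d : ℕ) (hn : 1 ≤ n) (hd : 3 ≤ d)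
    (A : Finset (GridPt n d)) (hA : Vol n d A ≤ 1/2) :
    Vol n d A ^ ((1:ℝ) - 1/(d:ℝ)) ≤ 2 * (d:ℝ) * Per n d A := by
  obtain ⟨m, rfl⟩ : ∃ m, d = m + 1 := ⟨d - 1, by omega⟩
  set D : ℝ := ((m + 1 : ℕ) : ℝ) with hD
  have hD1 : 1 ≤ D := by rw [hD]; exact_mod_cast Nat.succ_le_succ (Nat.zero_le m)
  have hDpos : 0 < D := by linarith
  have hper : 2 * D * Per n (m+1) A = 2 * ((bdry n (m+1) A).card : ℝ) / (2:ℝ)^(n*m) := by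
    unfold Per
    rw [← hD, Nat.add_sub_cancel]
    field_simp
  rw [hper]
  have h3D : 3 ≤ D := by rw [hD]; exact_mod_cast hd
  rcases A.eq_empty_or_nonempty with h0 | hne
  · have hv : Vol n (m+1) A = 0 := by simp [Vol, h0]
    rw [hv, Real.zero_rpow]
    · positivity
    · have : 1/D ≤ 1/3 := by gcongr
      linarith
  set N : ℝ := (2:ℝ)^n with hN
  have hNpos : 0 < N := by positivity
  set a : ℝ := (A.card : ℝ) with hadef
  have ha : 0 < a := by rw [hadef]; exact_mod_cast hne.card_pos
  set v : ℝ := Vol n (m+1) A with hv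
  have hva : v * N^(m+1) = a := by
    rw [hv, hN, Vol, ← pow_mul, hadef]; field_simp
  have hvpos : 0 < v := by
    rw [hv, Vol]; positivity
  have hNm : N^(m+1) = N ^ D := by rw [hD, Real.rpow_natCast]
  have hNm' : (2:ℝ)^(n*m) = N^(D - 1) := by
    rw [pow_mul, ← hN, hD]; push_cast; rw [add_sub_cancel_right, Real.rpow_natCast]
  -- powers of a
  have hapow : a ^ (1 - 1/D) = v ^ (1 - 1/D) * N^(D-1) := by
    rw [← hva, hNm, Real.mul_rpow hvpos.le (by positivity), ← Real.rpow_mul hNpos.le]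
    congr 2; field_simp
  have haN : a / N = v * N^(D-1) := by
    rw [← hva, hNm, Real.rpow_sub hNpos, Real.rpow_one]; ring
  let a0 : Fin (2^n) := ⟨0, by positivity⟩
  have hlw := loomis_whitney_sum a0 m A hne
  have hD' : (m:ℝ) + 1 = D := by rw [hD]; push_cast; ring
  rw [hD', ← hadef, hapow] at hlw
  have hb : ∑ i, (((projA a0 i A).card : ℝ) - a / N) ≤ ((bdry n (m+1) A).card : ℝ) := by
    refine le_trans (Finset.sum_le_sum (fun i _ => ?_))
      (by exact_mod_cast bdry_ge A a0 :
        ∑ i, (((projA a0 i A).filter (fun p => ¬ ∀ t, Function.update p i t ∈ A)).card : ℝ) ≤ _)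
    have hf := full_card a0 i A
    rw [Fintype.card_fin] at hf
    have hf' : (((projA a0 i A).filter (fun p => ∀ t, Function.update p i t ∈ A)).card : ℝ) * N
        ≤ a := by rw [hadef, hN]; exact_mod_cast hf
    have hs := Finset.card_filter_add_card_filter_not (s := projA a0 i A)
      (fun p => ∀ t, Function.update p i t ∈ A)
    have hs' : (((projA a0 i A).filter (fun p => ∀ t, Function.update p i t ∈ A)).card : ℝ) +
      (((projA a0 i A).filter (fun p => ¬ ∀ t, Function.update p i t ∈ A)).card : ℝ) =
        ((projA a0 i A).card : ℝ) := by exact_mod_cast hs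
    rw [← le_div_iff₀ hNpos] at hf'
    linarith
  rw [Finset.sum_sub_distrib, Finset.sum_const, Finset.card_univ, Fintype.card_fin,
    nsmul_eq_mul, ← hD, haN] at hb
  have hbern : v ^ (1/D) ≤ 1 - 1/(2*D) := by
    have h := rpow_one_add_le_one_add_mul_self (s := v - 1) (by linarith) (p := 1/D)
      (by positivity) (by rw [div_le_one hDpos]; exact hD1)
    rw [add_sub_cancel] at h
    have h' : 1/D * (v - 1) ≤ 1/D * (-(1/2)) := by
      apply mul_le_mul_of_nonneg_left _ (by positivity); linarith
    have : 1/(2*D) = 1/D * (1/2) := by field_simp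
    linarith
  have hvv : v = v ^ (1 - 1/D) * v ^ (1/D) := by
    rw [← Real.rpow_add hvpos]; simp
  set w : ℝ := v ^ (1 - 1/D) with hw
  have hwpos : 0 < w := by positivity
  have hvle : D * v ≤ D * w - w / 2 := by
    have h1 : v ≤ w * (1 - 1/(2*D)) := by
      calc v = w * v ^ (1/D) := hvv
        _ ≤ _ := by gcongr
    calc D * v ≤ D * (w * (1 - 1/(2*D))) := by gcongr
      _ = _ := by field_simp
  rw [hNm', le_div_iff₀ (by positivity)]
  have hX : 0 < N^(D-1) := by positivity
  have := mul_le_mul_of_nonneg_right hvle hX.le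
  nlinarith
end
end

section
/- Let n, d be integers with n ≥ 1 and d ≥ 3, let |||·||| be a seminorm on the real vector space of functions [2^n]^d → ℝ that vanishes on constant functions, and let C ∈ [0,∞). If |||1_A||| ≤ C·‖1_A‖_{W^{1,1}} for every subset A ⊆ [2^n]^d (where 1_A is the indicator function of A), then |||f||| ≤ C·‖f‖_{W^{1,1}} for every function f : [2^n]^d → ℝ. -/
open MeasureTheory Finset

noncomputable section

theorem W11_nonneg_aux (n d : ℕ) (f : GridPt n d → ℝ) : 0 ≤ W11 n d f := by
  unfold W11
  positivity

theorem W11_split_aux (n d : ℕ) (f g h : GridPt n d → ℝ) (t : ℝ)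
    (H : ∀ u v, |f v - f u| = |g v - g u| + t * |h v - h u|) :
    W11 n d f = W11 n d g + t * W11 n d h := by
  unfold W11
  have : ∑ e ∈ edgePairs n d, (2:ℝ)^n * |f e.2 - f e.1|
      = ∑ e ∈ edgePairs n d, (2:ℝ)^n * |g e.2 - g e.1|
        + t * ∑ e ∈ edgePairs n d, (2:ℝ)^n * |h e.2 - h e.1| := by
    rw [Finset.mul_sum, ← Finset.sum_add_distrib]
    refine Finset.sum_congr rfl fun e _ => ?_
    rw [H]; ring
  rw [this]; ring

/-- If a seminorm on functions on the grid vanishes on constants and is bounded by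
`C·‖·‖_{W^{1,1}}` on indicator functions, then it is bounded by `C·‖·‖_{W^{1,1}}`
on all functions. -/
theorem seminorm_indicator_to_general (n d : ℕ) (hn : 1 ≤ n) (hd : 3 ≤ d)
    (N : Seminorm ℝ (GridPt n d → ℝ))
    (hconst : ∀ c : ℝ, N (fun _ => c) = 0)
    (C : ℝ) (hC : 0 ≤ C)
    (hind : ∀ A : Finset (GridPt n d),
      N (fun x => if x ∈ A then (1:ℝ) else 0)
        ≤ C * W11 n d (fun x => if x ∈ A then (1:ℝ) else 0)) :
    ∀ f : GridPt n d → ℝ, N f ≤ C * W11 n d f := by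
  intro f
  induction hk : (Finset.univ.image f).card using Nat.strong_induction_on generalizing f with
  | _ k ih =>
  subst hk
  have hne : (Finset.univ.image f).Nonempty :=
    ⟨f (fun _ => ⟨0, by positivity⟩), Finset.mem_image_of_mem _ (Finset.mem_univ _)⟩
  obtain ⟨M, hM, hmax⟩ : ∃ M ∈ Finset.univ.image f, ∀ y ∈ Finset.univ.image f, y ≤ M :=
    ⟨_, Finset.max'_mem _ hne, fun y hy => Finset.le_max' _ y hy⟩
  by_cases he : ((Finset.univ.image f).erase M).Nonempty
  · obtain ⟨m, hm, hmm⟩ : ∃ m ∈ (Finset.univ.image f).erase M,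
        ∀ y ∈ (Finset.univ.image f).erase M, y ≤ m :=
      ⟨_, Finset.max'_mem _ he, fun y hy => Finset.le_max' _ y hy⟩
    have hmM : m ≤ M := hmax m (Finset.mem_of_mem_erase hm)
    have hfm : ∀ x, f x ≠ M → f x ≤ m := fun x hx =>
      hmm _ (Finset.mem_erase.2 ⟨hx, Finset.mem_image_of_mem _ (Finset.mem_univ _)⟩)
    set A : Finset (GridPt n d) := Finset.univ.filter (fun x => f x = M) with hA
    have hmA : ∀ x, x ∈ A ↔ f x = M := fun x => by simp [hA]
    set h : GridPt n d → ℝ := fun x => if x ∈ A then (1:ℝ) else 0 with hh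
    set g : GridPt n d → ℝ := fun x => if f x = M then m else f x with hg
    have hcard : (Finset.univ.image g).card < (Finset.univ.image f).card := by
      refine lt_of_le_of_lt (Finset.card_le_card ?_) (Finset.card_erase_lt_of_mem hM)
      intro y hy
      obtain ⟨x, -, rfl⟩ := Finset.mem_image.1 hy
      by_cases hx : f x = M
      · simpa only [hg, hx, if_true] using hm
      · simp only [hg, hx, if_false]
        exact Finset.mem_erase.2 ⟨hx, Finset.mem_image_of_mem _ (Finset.mem_univ _)⟩
    have hfg : f = g + (M - m) • h := by
      funext x
      by_cases hx : f x = M <;> simp [hg, hh, hmA, hx]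
    have hW := W11_split_aux n d f g h (M - m) (by
      intro u v
      by_cases hu : f u = M <;> by_cases hv : f v = M <;>
        simp only [hg, hh, hmA, hu, hv, if_true, if_false]
      · simp
      · have := hfm v hv
        rw [abs_of_nonpos (by linarith), abs_of_nonpos (by linarith)]; norm_num
      · have := hfm u hu
        rw [abs_of_nonneg (by linarith), abs_of_nonneg (by linarith)]; norm_num
      · simp)
    have h1 := ih _ hcard g rfl
    have h2 : N h ≤ C * W11 n d h := hind A
    calc N f = N (g + (M - m) • h) := by rw [← hfg]
      _ ≤ N g + N ((M - m) • h) := map_add_le_add N _ _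
      _ = N g + (M - m) * N h := by
        rw [map_smul_eq_mul, Real.norm_of_nonneg (by linarith)]
      _ ≤ C * W11 n d g + (M - m) * (C * W11 n d h) :=
        add_le_add h1 (mul_le_mul_of_nonneg_left h2 (by linarith))
      _ = C * W11 n d f := by rw [hW]; ring
  · have hf : f = fun _ => M := by
      funext x
      by_contra hx
      exact he ⟨f x, Finset.mem_erase.2 ⟨hx, Finset.mem_image_of_mem _ (Finset.mem_univ _)⟩⟩
    have h0 : N f = 0 := by rw [hf]; exact hconst M
    rw [h0]
    exact mul_nonneg hC (W11_nonneg_aux n d f)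
end
end
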